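/- arXiv:1510.06328 — 3 statements merged into one kernel-verified Lean document; each statement's English description precedes it below -/
import Mathlib

section
/- A permutation σ avoids all three patterns 4213, 2413 and 2143 if and only if σ admits an H-gridding, i.e. there exists a value cutoff k with 0 ≤ k ≤ n such that the subsequence of entries of σ with values greater than k is increasing and the subsequence of entries with values at most k avoids the pattern 213. -/
open Filter Topology PowerSeries

/-- `σ` contains the pattern `π`. -/
def PatternContains {n k : ℕ} (σ : Equiv.Perm (Fin n)) (π : Fin k → Fin k) : Prop :=
  ∃ f : Fin k → Fin n, StrictMono f ∧ ∀ a b : Fin k, π a < π b ↔ σ (f a) < σ (f b)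

/-- `σ` avoids the pattern `π`. -/
def PatternAvoids {n k : ℕ} (σ : Equiv.Perm (Fin n)) (π : Fin k → Fin k) : Prop :=
  ¬ PatternContains σ π

/-- The pattern 4213 (zero-indexed values). -/
def p4213 : Fin 4 → Fin 4 := ![3, 1, 0, 2]

/-- The pattern 2413 (zero-indexed values). -/
def p2413 : Fin 4 → Fin 4 := ![1, 3, 0, 2]

/-- The pattern 2143 (zero-indexed values). -/
def p2143 : Fin 4 → Fin 4 := ![1, 0, 3, 2]

/-- The pattern 213 (zero-indexed values). -/
def p213 : Fin 3 → Fin 3 := ![1, 0, 2]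

/-- `σ` avoids 4213, 2413 and 2143. -/
def AvoidsH {n : ℕ} (σ : Equiv.Perm (Fin n)) : Prop :=
  PatternAvoids σ p4213 ∧ PatternAvoids σ p2413 ∧ PatternAvoids σ p2143

/-- `σ` avoids 4213 and 2143. -/
def AvoidsD {n : ℕ} (σ : Equiv.Perm (Fin n)) : Prop :=
  PatternAvoids σ p4213 ∧ PatternAvoids σ p2143

/-- An H-gridding of `σ`: a value cutoff `k ∈ {0,…,n}` such that the subsequence of
entries with (1-based) values `> k` is increasing and the subsequence of entries with
values `≤ k` avoids 213. -/
def HGridding {n : ℕ} (σ : Equiv.Perm (Fin n)) (k : ℕ) : Prop :=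
  k ≤ n ∧
  (∀ i j : Fin n, i < j → k < (σ i : ℕ) + 1 → k < (σ j : ℕ) + 1 → σ i < σ j) ∧
  ¬ ∃ f : Fin 3 → Fin n, StrictMono f ∧ (∀ a, (σ (f a) : ℕ) + 1 ≤ k) ∧
      (∀ a b : Fin 3, p213 a < p213 b ↔ σ (f a) < σ (f b))

/-- A G-gridding of `σ`: a pair `(j, k)` with `0 ≤ j, k ≤ n` such that (i) the first `j`
entries have values `≤ k` and are increasing, (ii) the subsequence of entries at
(1-based) positions `> j` with values `> k` is increasing, and (iii) the subsequence of
entries at positions `> j` with values `≤ k` avoids 213. -/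
def GGridding {n : ℕ} (σ : Equiv.Perm (Fin n)) (j k : ℕ) : Prop :=
  j ≤ n ∧ k ≤ n ∧
  (∀ i : Fin n, (i : ℕ) < j → (σ i : ℕ) + 1 ≤ k) ∧
  (∀ i₁ i₂ : Fin n, i₁ < i₂ → (i₂ : ℕ) < j → σ i₁ < σ i₂) ∧
  (∀ i₁ i₂ : Fin n, i₁ < i₂ → j ≤ (i₁ : ℕ) → k < (σ i₁ : ℕ) + 1 → k < (σ i₂ : ℕ) + 1 →
      σ i₁ < σ i₂) ∧
  ¬ ∃ f : Fin 3 → Fin n, StrictMono f ∧ (∀ a, j ≤ ((f a) : ℕ) ∧ (σ (f a) : ℕ) + 1 ≤ k) ∧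
      (∀ a b : Fin 3, p213 a < p213 b ↔ σ (f a) < σ (f b))

/-- The number of permutations of length `n` avoiding 4213, 2413 and 2143. -/
noncomputable def hCount (n : ℕ) : ℕ :=
  Nat.card {σ : Equiv.Perm (Fin n) // AvoidsH σ}

/-- The number of permutations of length `n` avoiding 4213 and 2143. -/
noncomputable def dCount (n : ℕ) : ℕ :=
  Nat.card {σ : Equiv.Perm (Fin n) // AvoidsD σ}

/-- The minimal number of top points over all H-griddings of `σ`. -/
noncomputable def topPts {n : ℕ} (σ : Equiv.Perm (Fin n)) : ℕ :=
  n - sSup {k | HGridding σ k}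

/-- The minimal number of left points over all G-griddings of `σ`. -/
noncomputable def leftPts {n : ℕ} (σ : Equiv.Perm (Fin n)) : ℕ :=
  sInf {j | ∃ k, GGridding σ j k}

/-! An entry can be placed above the cutoff only if it is a left-to-right maximum: a larger entry
preceding it would lie above the cutoff too. Conversely, the entries above a cutoff are increasing
as soon as all of them are left-to-right maxima. The three patterns of length four are exactly the
ways to put a larger entry in front of the 3 of a 213, so avoiding them says that the 3 of every
213 is a left-to-right maximum. The lowest cutoff with only left-to-right maxima above it then
works: if the 3 of some 213 had at most the value of an entry `p` that is not a left-to-right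
maximum, either this 3 would come after `p` and have a larger entry in front of it as well, or `p`
could replace it. -/

/-- The entry of `u` at position `p` is a left-to-right maximum. The weak inequality, equivalent to
the strict one for injective `u`, makes the negation the existence of an earlier larger entry. -/
def IsLeftToRightMax {ι α : Type*} [LT ι] [LE α] (u : ι → α) (p : ι) : Prop :=
  ∀ q < p, u q ≤ u p

/-- The entries of `u` at positions `i`, `j`, `l` form, in this order, an occurrence of the pattern
213, written out as inequalities for arbitrary sequences. -/
def Is213At {ι α : Type*} [LT ι] [LT α] (u : ι → α) (i j l : ι) : Prop :=
  i < j ∧ j < l ∧ u j < u i ∧ u i < u l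

theorem Is213At.exists_not_isLeftToRightMax {ι α : Type*} [LinearOrder ι] [Preorder α]
    {u : ι → α} {i j l p : ι} (h : Is213At u i j l) (hp : ¬ IsLeftToRightMax u p)
    (hlp : u l ≤ u p) :
    ∃ m, Is213At u i j m ∧ ¬ IsLeftToRightMax u m := by
  obtain ⟨hij, hjl, hji, hil⟩ := h
  rcases lt_or_ge p l with hpl | hpl
  · exact ⟨l, ⟨hij, hjl, hji, hil⟩, fun hl => hp fun q hq => (hl q (hq.trans hpl)).trans hlp⟩
  · exact ⟨p, ⟨hij, hjl.trans_le hpl, hji, hil.trans_le hlp⟩, hp⟩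

theorem strictMonoOn_preimage_iff_forall_isLeftToRightMax {ι α : Type*} [Preorder ι]
    [LinearOrder α] {u : ι → α} {S : Set α} (hu : Function.Injective u) (hS : IsUpperSet S) :
    StrictMonoOn u (u ⁻¹' S) ↔ ∀ p, u p ∈ S → IsLeftToRightMax u p := by
  constructor
  · intro h p hp q hqp
    by_contra! hpq
    exact (h (hS hpq.le hp) hp hqp).not_gt hpq
  · intro h q _ p hp hqp
    exact (h p hp q hqp).lt_of_ne (hu.ne hqp.ne)

/-- Since `ρ` inverts `π`, `u ∘ ρ` lists the entries of an occurrence `u` of `π` from the smallest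
to the largest. -/
theorem forall_lt_iff_lt_iff_strictMono_comp {ι κ α : Type*} [LinearOrder κ] [Preorder α]
    {π : ι → κ} {ρ : κ → ι} (hl : Function.LeftInverse ρ π) (hr : Function.RightInverse ρ π)
    (u : ι → α) : (∀ a b, π a < π b ↔ u a < u b) ↔ StrictMono (u ∘ ρ) := by
  constructor
  · intro h x y hxy
    exact (h (ρ x) (ρ y)).1 (by rwa [hr x, hr y])
  · intro h a b
    simpa only [Function.comp_apply, hl a, hl b] using (h.lt_iff_lt (a := π a) (b := π b)).symm

theorem strictMono_fin_four_iff {α : Type*} [Preorder α] {f : Fin 4 → α} :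
    StrictMono f ↔ f 0 < f 1 ∧ f 1 < f 2 ∧ f 2 < f 3 := by
  simp [Fin.strictMono_iff_lt_succ, Fin.forall_fin_succ]

theorem p213_lt_iff_lt_iff {α : Type*} [Preorder α] (v : Fin 3 → α) :
    (∀ a b, p213 a < p213 b ↔ v a < v b) ↔ v 1 < v 0 ∧ v 0 < v 2 := by
  rw [forall_lt_iff_lt_iff_strictMono_comp (ρ := ![1, 0, 2]) (by decide) (by decide)]
  simp [Fin.strictMono_iff_lt_succ, Fin.forall_fin_succ]

section Perm

variable {n : ℕ} (σ : Equiv.Perm (Fin n))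

theorem patternContains_iff_exists_fin_four {π ρ : Fin 4 → Fin 4}
    (hl : Function.LeftInverse ρ π) (hr : Function.RightInverse ρ π) :
    PatternContains σ π ↔ ∃ a b c d, a < b ∧ b < c ∧ c < d ∧
      σ (![a, b, c, d] (ρ 0)) < σ (![a, b, c, d] (ρ 1)) ∧
      σ (![a, b, c, d] (ρ 1)) < σ (![a, b, c, d] (ρ 2)) ∧
      σ (![a, b, c, d] (ρ 2)) < σ (![a, b, c, d] (ρ 3)) := by
  have hσ (f : Fin 4 → Fin n) : (∀ a b, π a < π b ↔ σ (f a) < σ (f b)) ↔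
      σ (f (ρ 0)) < σ (f (ρ 1)) ∧ σ (f (ρ 1)) < σ (f (ρ 2)) ∧ σ (f (ρ 2)) < σ (f (ρ 3)) :=
    (forall_lt_iff_lt_iff_strictMono_comp hl hr (σ ∘ f)).trans strictMono_fin_four_iff
  simp only [PatternContains, hσ, strictMono_fin_four_iff, ← FinVec.exists_iff, and_assoc]
  rfl

theorem patternContains_p4213_iff :
    PatternContains σ p4213 ↔ ∃ i j l, Is213At σ i j l ∧ ∃ q < i, σ l < σ q := by
  rw [patternContains_iff_exists_fin_four σ (ρ := ![2, 1, 3, 0]) (by decide) (by decide)]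
  constructor
  · rintro ⟨q, i, j, l, hqi, hij, hjl, hji, hil, hlq⟩
    exact ⟨i, j, l, ⟨hij, hjl, hji, hil⟩, q, hqi, hlq⟩
  · rintro ⟨i, j, l, ⟨hij, hjl, hji, hil⟩, q, hqi, hlq⟩
    exact ⟨q, i, j, l, hqi, hij, hjl, hji, hil, hlq⟩

theorem patternContains_p2413_iff :
    PatternContains σ p2413 ↔ ∃ i j l, Is213At σ i j l ∧ ∃ q, i < q ∧ q < j ∧ σ l < σ q := by
  rw [patternContains_iff_exists_fin_four σ (ρ := ![2, 0, 3, 1]) (by decide) (by decide)]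
  constructor
  · rintro ⟨i, q, j, l, hiq, hqj, hjl, hji, hil, hlq⟩
    exact ⟨i, j, l, ⟨hiq.trans hqj, hjl, hji, hil⟩, q, hiq, hqj, hlq⟩
  · rintro ⟨i, j, l, ⟨-, hjl, hji, hil⟩, q, hiq, hqj, hlq⟩
    exact ⟨i, q, j, l, hiq, hqj, hjl, hji, hil, hlq⟩

theorem patternContains_p2143_iff :
    PatternContains σ p2143 ↔ ∃ i j l, Is213At σ i j l ∧ ∃ q, j < q ∧ q < l ∧ σ l < σ q := by
  rw [patternContains_iff_exists_fin_four σ (ρ := ![1, 0, 3, 2]) (by decide) (by decide)]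
  constructor
  · rintro ⟨i, j, q, l, hij, hjq, hql, hji, hil, hlq⟩
    exact ⟨i, j, l, ⟨hij, hjq.trans hql, hji, hil⟩, q, hjq, hql, hlq⟩
  · rintro ⟨i, j, l, ⟨hij, -, hji, hil⟩, q, hjq, hql, hlq⟩
    exact ⟨i, j, q, l, hij, hjq, hql, hji, hil, hlq⟩

theorem patternAvoids_4213_2413_2143_iff :
    (PatternAvoids σ p4213 ∧ PatternAvoids σ p2413 ∧ PatternAvoids σ p2143) ↔
      ∀ i j l, Is213At σ i j l → IsLeftToRightMax σ l := by
  simp only [PatternAvoids, patternContains_p4213_iff, patternContains_p2413_iff,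
    patternContains_p2143_iff]
  constructor
  · rintro ⟨h4213, h2413, h2143⟩ i j l h q hql
    by_contra! hlq
    have hji : σ j < σ i := h.2.2.1
    have hil : σ i < σ l := h.2.2.2
    rcases lt_trichotomy q i with hqi | rfl | hiq
    · exact h4213 ⟨i, j, l, h, q, hqi, hlq⟩
    · exact hlq.not_gt hil
    rcases lt_trichotomy q j with hqj | rfl | hjq
    · exact h2413 ⟨i, j, l, h, q, hiq, hqj, hlq⟩
    · exact hlq.not_gt (hji.trans hil)
    · exact h2143 ⟨i, j, l, h, q, hjq, hql, hlq⟩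
  · intro h
    refine ⟨?_, ?_, ?_⟩
    · rintro ⟨i, j, l, hijl, q, hqi, hlq⟩
      exact (h i j l hijl q (hqi.trans (hijl.1.trans hijl.2.1))).not_gt hlq
    · rintro ⟨i, j, l, hijl, q, -, hqj, hlq⟩
      exact (h i j l hijl q (hqj.trans hijl.2.1)).not_gt hlq
    · rintro ⟨i, j, l, hijl, q, -, hql, hlq⟩
      exact (h i j l hijl q hql).not_gt hlq

theorem forall_lt_above_cutoff_iff (k : ℕ) :
    (∀ i j : Fin n, i < j → k < (σ i : ℕ) + 1 → k < (σ j : ℕ) + 1 → σ i < σ j) ↔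
      ∀ p, k ≤ (σ p : ℕ) → IsLeftToRightMax σ p := by
  have hS : IsUpperSet ((↑) ⁻¹' Set.Ici k : Set (Fin n)) :=
    (isUpperSet_Ici k).preimage Fin.val_strictMono.monotone
  refine Iff.trans ?_ (strictMonoOn_preimage_iff_forall_isLeftToRightMax (u := σ) σ.injective hS)
  simp only [Nat.lt_succ_iff]
  exact ⟨fun h i hi j hj hij => h i j hij hi hj, fun h i j hij hi hj => h hi hj hij⟩

theorem exists_occurrence_p213_le_iff (k : ℕ) :
    (∃ f : Fin 3 → Fin n, StrictMono f ∧ (∀ a, (σ (f a) : ℕ) + 1 ≤ k) ∧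
      (∀ a b : Fin 3, p213 a < p213 b ↔ σ (f a) < σ (f b))) ↔
      ∃ i j l, Is213At σ i j l ∧ (σ l : ℕ) < k := by
  constructor
  · rintro ⟨f, hf, hle, h⟩
    obtain ⟨h10, h02⟩ := (p213_lt_iff_lt_iff (σ ∘ f)).1 h
    exact ⟨f 0, f 1, f 2, ⟨hf (by decide), hf (by decide), h10, h02⟩, hle 2⟩
  · rintro ⟨i, j, l, ⟨hij, hjl, hji, hil⟩, hl⟩
    refine ⟨![i, j, l], by simp [hij, hjl], ?_, (p213_lt_iff_lt_iff (σ ∘ _)).2 ⟨hji, hil⟩⟩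
    have hi : (σ i : ℕ) < k := lt_trans hil hl
    have hj : (σ j : ℕ) < k := lt_trans hji hi
    simpa [Fin.forall_fin_succ] using ⟨hi, hj, hl⟩

theorem hGridding_iff (k : ℕ) :
    HGridding σ k ↔ k ≤ n ∧ (∀ p, k ≤ (σ p : ℕ) → IsLeftToRightMax σ p) ∧
      ∀ i j l, Is213At σ i j l → k ≤ (σ l : ℕ) := by
  simp only [HGridding, forall_lt_above_cutoff_iff, exists_occurrence_p213_le_iff, not_exists,
    not_and, not_lt]

/-- The lowest value cutoff above which all entries of `σ` are left-to-right maxima: the largest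
1-based value of any other entry, or 0 if there is none. -/
noncomputable def leftToRightMaxCutoff : ℕ :=
  open Classical in {p | ¬ IsLeftToRightMax σ p}.toFinset.sup fun p => (σ p : ℕ) + 1

theorem lt_leftToRightMaxCutoff_iff {m : ℕ} :
    m < leftToRightMaxCutoff σ ↔ ∃ p, ¬ IsLeftToRightMax σ p ∧ m ≤ (σ p : ℕ) := by
  simp [leftToRightMaxCutoff, Finset.lt_sup_iff]

theorem leftToRightMaxCutoff_le : leftToRightMaxCutoff σ ≤ n :=
  Finset.sup_le fun p _ => (σ p).isLt

end Perm

theorem avoidsH_iff_exists_HGridding {n : ℕ} (σ : Equiv.Perm (Fin n)) :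
    (PatternAvoids σ p4213 ∧ PatternAvoids σ p2413 ∧ PatternAvoids σ p2143) ↔
      ∃ k, HGridding σ k := by
  simp only [patternAvoids_4213_2413_2143_iff, hGridding_iff]
  constructor
  · intro h
    refine ⟨leftToRightMaxCutoff σ, leftToRightMaxCutoff_le σ, fun p => ?_, fun i j l h213 => ?_⟩
    · contrapose!
      exact fun hp => (lt_leftToRightMaxCutoff_iff σ).2 ⟨p, hp, le_rfl⟩
    · by_contra! hl
      obtain ⟨p, hp, hlp⟩ := (lt_leftToRightMaxCutoff_iff σ).1 hl
      obtain ⟨m, hm, hm'⟩ := h213.exists_not_isLeftToRightMax hp hlp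
      exact hm' (h i j m hm)
  · rintro ⟨k, -, hmax, h213⟩ i j l h
    exact hmax l (h213 i j l h)
end

section
/- Let h(n) denote the number of permutations of length n avoiding the patterns 4213, 2413 and 2143, and let H = ∑_{n≥1} h(n)·zⁿ be the associated formal power series over ℚ (with constant term 0). Then H satisfies the algebraic identity z·(2 − z)·H² − (1 − 3z + 2z²)·H + z·(1 − z) = 0 in ℚ⟦z⟧; equivalently, H(z) = (1 − 3z + 2z² − √(1 − 6z + 5z²)) / (2z(2 − z)). -/
open Filter Topology PowerSeries

/-!
Build permutations by appending a new last entry. A permutation avoids the three patterns exactly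
when every entry playing the role of 3 in an occurrence of 213 is a left-to-right maximum. Hence, if
`t` is the least value that is the larger entry of an inversion (`t = n` for the identity of length
`n`), the new last entry may take the values `v ≤ t` and the maximal value, and no other; the label
`t` becomes `v + 1` if `v ≤ t` and does not change otherwise. The generating functions of the
subtrees of this generating tree satisfy a linear recursion in `t`, which the kernel method solves:
with `λ = 1 + z λ² / (1 - z)`, i.e. `λ` the Catalan series at `z / (1 - z)`, the avoiding
extensions of a permutation of length `n` have the generating function `λ ^ (t + 1) / (1 - z)`, or
`λ ^ n / (1 - z λ)` if the permutation is the identity. In particular `1 + H = 1 / (1 - z λ)`, and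
eliminating `λ` gives the quadratic equation.
-/

section Permutations

variable {n : ℕ} {v : Fin (n + 1)} {σ : Equiv.Perm (Fin n)}

theorem patternContains_iff_exists_four {π : Fin 4 → Fin 4} :
    PatternContains σ π ↔ ∃ a b c d, a < b ∧ b < c ∧ c < d ∧
      ∀ x y, π x < π y ↔ σ (![a, b, c, d] x) < σ (![a, b, c, d] y) := by
  constructor
  · rintro ⟨f, hf, hπ⟩
    refine ⟨f 0, f 1, f 2, f 3, hf (by decide), hf (by decide), hf (by decide), ?_⟩
    have hvec : ![f 0, f 1, f 2, f 3] = f := by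
      ext i
      fin_cases i <;> rfl
    rwa [hvec]
  · rintro ⟨a, b, c, d, hab, hbc, hcd, hπ⟩
    refine ⟨![a, b, c, d], Fin.strictMono_iff_lt_succ.2 ?_, hπ⟩
    simp [Fin.forall_fin_succ, hab, hbc, hcd]

theorem patternContains_p4213_iff_s1 :
    PatternContains σ p4213 ↔
      ∃ a b c d, a < b ∧ b < c ∧ c < d ∧ σ c < σ b ∧ σ b < σ d ∧ σ d < σ a := by
  simp [patternContains_iff_exists_four, p4213, Fin.forall_fin_succ]
  grind

theorem patternContains_p2413_iff_s1 :
    PatternContains σ p2413 ↔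
      ∃ a b c d, a < b ∧ b < c ∧ c < d ∧ σ c < σ a ∧ σ a < σ d ∧ σ d < σ b := by
  simp [patternContains_iff_exists_four, p2413, Fin.forall_fin_succ]
  grind

theorem patternContains_p2143_iff_s1 :
    PatternContains σ p2143 ↔
      ∃ a b c d, a < b ∧ b < c ∧ c < d ∧ σ b < σ a ∧ σ a < σ d ∧ σ d < σ c := by
  simp [patternContains_iff_exists_four, p2143, Fin.forall_fin_succ]
  grind

theorem avoidsH_iff :
    AvoidsH σ ↔ ∀ a b i j, a < b → b < i → j < i → σ b < σ a → σ a < σ i → σ j < σ i := by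
  simp only [AvoidsH, PatternAvoids, patternContains_p4213_iff_s1, patternContains_p2413_iff_s1,
    patternContains_p2143_iff_s1]
  constructor
  · rintro ⟨h4213, h2413, h2143⟩ a b i j hab hbi hji hba hai
    by_contra hij
    have hlt : σ i < σ j := lt_of_le_of_ne (not_lt.1 hij) (σ.injective.ne hji.ne')
    rcases lt_trichotomy j a with hja | rfl | haj
    · exact h4213 ⟨j, a, b, i, hja, hab, hbi, hba, hai, hlt⟩
    · exact hij hai
    rcases lt_trichotomy j b with hjb | rfl | hbj
    · exact h2413 ⟨a, j, b, i, haj, hjb, hbi, hba, hai, hlt⟩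
    · exact hij (hba.trans hai)
    · exact h2143 ⟨a, b, j, i, hab, hbj, hji, hba, hai, hlt⟩
  · grind

/-- The permutation obtained from `σ` by appending the last entry `v`; the entries of `σ` that are
at least `v` are raised by one. -/
def snocPerm (v : Fin (n + 1)) (σ : Equiv.Perm (Fin n)) : Equiv.Perm (Fin (n + 1)) :=
  ((finSuccEquiv' (Fin.last n)).trans σ.optionCongr).trans (finSuccEquiv' v).symm

@[simp]
theorem snocPerm_last (v : Fin (n + 1)) (σ : Equiv.Perm (Fin n)) :
    snocPerm v σ (Fin.last n) = v := by
  simp [snocPerm]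

@[simp]
theorem snocPerm_castSucc (v : Fin (n + 1)) (σ : Equiv.Perm (Fin n)) (i : Fin n) :
    snocPerm v σ i.castSucc = v.succAbove (σ i) := by
  rw [← Fin.succAbove_last]
  simp [snocPerm, -Fin.succAbove_last]

theorem snocPerm_bijective (n : ℕ) :
    Function.Bijective fun x : Equiv.Perm (Fin n) × Fin (n + 1) => snocPerm x.2 x.1 := by
  refine (Fintype.bijective_iff_injective_and_card _).2 ⟨?_, ?_⟩
  · rintro ⟨σ, v⟩ ⟨τ, w⟩ (h : snocPerm v σ = snocPerm w τ)
    obtain rfl : v = w := by simpa using DFunLike.congr_fun h (Fin.last n)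
    have hστ : σ = τ := Equiv.ext fun i => by simpa using DFunLike.congr_fun h i.castSucc
    rw [hστ]
  · simp [Fintype.card_perm, Nat.factorial_succ, mul_comm]

/-- The least value that is the larger entry of an inversion of `σ`, the label of `σ` in the
generating tree. It is set to `n` if `σ` has no inversion. -/
noncomputable def minInversionTop (σ : Equiv.Perm (Fin n)) : ℕ :=
  sInf {v | v = n ∨ ∃ a b, a < b ∧ σ b < σ a ∧ (σ a : ℕ) = v}

theorem minInversionTop_lt_iff {w : ℕ} :
    minInversionTop σ < w ↔ n < w ∨ ∃ a b, a < b ∧ σ b < σ a ∧ (σ a : ℕ) < w := by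
  rw [minInversionTop, csInf_lt_iff (OrderBot.bddBelow _) ⟨n, .inl rfl⟩]
  grind

theorem minInversionTop_le (σ : Equiv.Perm (Fin n)) : minInversionTop σ ≤ n :=
  Nat.sInf_le (.inl rfl)

theorem avoidsH_snocPerm_iff_forall :
    AvoidsH (snocPerm v σ) ↔
      AvoidsH σ ∧ ∀ a b j, a < b → σ b < σ a → (σ a : ℕ) < v → (σ j : ℕ) < v := by
  have hlast (i : Fin n) : ¬Fin.last n < i.castSucc := (Fin.le_last _).not_gt
  have hval (x : Fin n) : x.castSucc < v ↔ (x : ℕ) < v := Iff.rfl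
  simp [avoidsH_iff, Fin.forall_fin_succ', Fin.succAbove_lt_iff_castSucc_lt,
    Fin.castSucc_lt_last, hlast, hval, forall_and]

theorem forall_apply_lt_iff_eq_last : (∀ j, (σ j : ℕ) < v) ↔ v = Fin.last n := by
  rw [σ.forall_congr_left]
  constructor
  · intro h
    by_contra hv
    obtain ⟨u, rfl⟩ := Fin.exists_castSucc_eq.2 hv
    simpa using h u
  · rintro rfl j
    simp

theorem avoidsH_snocPerm_iff :
    AvoidsH (snocPerm v σ) ↔ AvoidsH σ ∧ ((v : ℕ) ≤ minInversionTop σ ∨ v = Fin.last n) := by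
  rw [avoidsH_snocPerm_iff_forall, ← forall_apply_lt_iff_eq_last (σ := σ), ← not_lt,
    minInversionTop_lt_iff]
  refine and_congr_right fun _ => ⟨fun h => ?_, ?_⟩
  · rw [or_iff_not_imp_left, not_not]
    rintro (hv | ⟨a, b, hab, hba, hav⟩) j
    · exact absurd v.is_le hv.not_ge
    · exact h a b j hab hba hav
  · rintro (h | h) a b j hab hba hav
    · exact absurd (.inr ⟨a, b, hab, hba, hav⟩) h
    · exact h j

theorem exists_inversion_snocPerm_iff {w : ℕ} (hw : w ≤ n + 1) :
    (∃ a b, a < b ∧ snocPerm v σ b < snocPerm v σ a ∧ (snocPerm v σ a : ℕ) < w) ↔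
      (∃ a b, a < b ∧ σ b < σ a ∧ (σ a : ℕ) < min (v : ℕ) w) ∨ (v : ℕ) + 1 < w := by
  have hlast (i : Fin n) : ¬Fin.last n < i.castSucc := (Fin.le_last _).not_gt
  have hval (x : Fin n) : (v.succAbove x : ℕ) = if (x : ℕ) < v then (x : ℕ) else x + 1 := by
    rw [Fin.succAbove]
    split_ifs <;> grind
  have hsplit : (∃ a b, a < b ∧ snocPerm v σ b < snocPerm v σ a ∧ (snocPerm v σ a : ℕ) < w) ↔
      ∃ a, (∃ b, a < b ∧ σ b < σ a ∧ (v.succAbove (σ a) : ℕ) < w) ∨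
        (v : ℕ) ≤ σ a ∧ (v.succAbove (σ a) : ℕ) < w := by
    simp [Fin.exists_fin_succ', Fin.castSucc_lt_last, hlast, Fin.lt_succAbove_iff_le_castSucc,
      Fin.le_def]
  rw [hsplit]
  constructor
  · grind
  · rintro (⟨a, b, hab, hba, hav⟩ | hv)
    · exact ⟨a, .inl ⟨b, hab, hba, by grind⟩⟩
    · exact ⟨σ.symm ⟨v, by omega⟩, .inr (by simp [hval, hv])⟩

theorem minInversionTop_snocPerm (v : Fin (n + 1)) (σ : Equiv.Perm (Fin n)) :
    minInversionTop (snocPerm v σ) =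
      if (v : ℕ) ≤ minInversionTop σ then (v : ℕ) + 1 else minInversionTop σ := by
  refine eq_of_forall_gt_iff fun w => ?_
  have hv := v.is_le
  rw [minInversionTop_lt_iff]
  have hmin := minInversionTop_lt_iff (σ := σ) (w := min (v : ℕ) w)
  have hsnoc := exists_inversion_snocPerm_iff (v := v) (σ := σ) (w := w)
  split_ifs <;> grind

end Permutations

theorem eq_mk_of_forall_eq_C_add_X_mul {R : Type*} [Semiring R] {a : ℕ → R} {W : ℕ → R⟦X⟧}
    (h : ∀ n, W n = C (a n) + X * W (n + 1)) : W 0 = mk a := by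
  have hcoeff (m n : ℕ) : coeff m (W n) = a (n + m) := by
    induction m generalizing n with
    | zero => rw [h]; simp
    | succ m ih => rw [h]; simp [coeff_succ_X_mul, ih, add_right_comm, add_assoc]
  ext m
  simp [hcoeff]

section Series

variable (R : Type*) [CommRing R]

/-- The geometric series `1 / (1 - X)`. -/
noncomputable def geomSeries : R⟦X⟧ := mk 1

theorem one_sub_X_mul_geomSeries : (1 - X) * geomSeries R = 1 := by
  rw [mul_comm, geomSeries, mk_one_mul_one_sub_eq_one]

/-- The series `λ` with `λ = 1 + X λ² / (1 - X)` from the kernel method: the Catalan series at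
`X / (1 - X)`. -/
noncomputable def kernelRoot : R⟦X⟧ :=
  (catalanSeries.map (Nat.castRingHom R)).subst (X * geomSeries R)

theorem kernelRoot_eq : kernelRoot R = 1 + X * geomSeries R * kernelRoot R ^ 2 := by
  have hsubst : HasSubst (X * geomSeries R) := .of_constantCoeff_zero' (by simp)
  have hcatalan := congrArg (PowerSeries.map (Nat.castRingHom R)) catalanSeries_sq_mul_X_add_one
  simp only [map_add, map_mul, map_pow, map_X, map_one] at hcatalan
  have h := congrArg (subst (X * geomSeries R)) hcatalan
  rw [← coe_substAlgHom hsubst] at h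
  simp only [map_add, map_mul, map_pow, map_one, substAlgHom_X] at h
  rw [coe_substAlgHom] at h
  unfold kernelRoot
  linear_combination -h

theorem one_sub_X_mul_kernelRoot :
    (1 - X) * kernelRoot R = 1 - X + X * kernelRoot R ^ 2 := by
  linear_combination (1 - X) * kernelRoot_eq R +
    X * kernelRoot R ^ 2 * one_sub_X_mul_geomSeries R

/-- The series `1 / (1 - X λ)`: the generating function of the avoiding extensions of an identity
permutation of length `n` is `λ ^ n` times this series. -/
noncomputable def identitySeries : R⟦X⟧ := invOfUnit (1 - X * kernelRoot R) 1

theorem one_sub_X_mul_kernelRoot_mul_identitySeries :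
    (1 - X * kernelRoot R) * identitySeries R = 1 :=
  mul_invOfUnit _ _ (by simp)

theorem identitySeries_quadratic :
    X * (2 - X) * identitySeries R ^ 2 - (1 + X) * identitySeries R + 1 = 0 := by
  linear_combination -X * identitySeries R ^ 2 * one_sub_X_mul_kernelRoot R +
    ((1 + X) * identitySeries R - 1 - (1 - X * kernelRoot R) * identitySeries R) *
      one_sub_X_mul_kernelRoot_mul_identitySeries R

/-- The generating function of all avoiding permutations reached from an avoiding permutation of
length `n` and label `t` by repeatedly appending a last entry, `X` marking the number of appended
entries. The case `t = n` is that of the identity. -/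
noncomputable def extensionSeries (n t : ℕ) : R⟦X⟧ :=
  if t < n then kernelRoot R ^ (t + 1) * geomSeries R else kernelRoot R ^ n * identitySeries R

theorem X_mul_sum_range_extensionSeries {m n : ℕ} (hmn : m ≤ n) :
    X * ∑ v ∈ Finset.range m, extensionSeries R (n + 1) (v + 1) = kernelRoot R ^ m - 1 := by
  rw [← mul_geom_sum, Finset.mul_sum, Finset.mul_sum]
  refine Finset.sum_congr rfl fun v hv => ?_
  rw [extensionSeries, if_pos (by grind)]
  linear_combination -kernelRoot R ^ v * kernelRoot_eq R

theorem X_mul_sum_extensionSeries (n t : ℕ) :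
    X * ∑ v : Fin n, (if (v : ℕ) ≤ t then extensionSeries R (n + 1) (v + 1) else 0) =
      kernelRoot R ^ min n (t + 1) - 1 := by
  rw [← X_mul_sum_range_extensionSeries R (min_le_left _ _),
    Fin.sum_univ_eq_sum_range fun v => if v ≤ t then extensionSeries R (n + 1) (v + 1) else 0,
    ← Finset.sum_filter]
  congr 2
  grind

theorem extensionSeries_eq {n t : ℕ} (ht : t ≤ n) :
    extensionSeries R n t = 1 + X * ∑ v : Fin (n + 1), if (v : ℕ) ≤ t ∨ v = Fin.last n then
      extensionSeries R (n + 1) (if (v : ℕ) ≤ t then v + 1 else t) else 0 := by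
  have hsum : ∑ v : Fin n, (if (v : ℕ) ≤ t ∨ v.castSucc = Fin.last n then
      extensionSeries R (n + 1) (if (v : ℕ) ≤ t then v + 1 else t) else 0) =
      ∑ v : Fin n, if (v : ℕ) ≤ t then extensionSeries R (n + 1) (v + 1) else 0 :=
    Finset.sum_congr rfl fun v _ => by grind [Fin.castSucc_ne_last]
  simp only [Fin.sum_univ_castSucc, Fin.val_castSucc, Fin.val_last, hsum, or_true, if_true,
    mul_add, X_mul_sum_extensionSeries]
  rcases ht.eq_or_lt with rfl | htn
  · simp only [extensionSeries, le_refl, if_true, lt_irrefl, if_false, min_eq_left (Nat.le_succ _)]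
    linear_combination kernelRoot R ^ t * one_sub_X_mul_kernelRoot_mul_identitySeries R
  · simp only [extensionSeries, htn, htn.not_ge, htn.trans_le (Nat.le_succ _), if_true, if_false,
      min_eq_right (Nat.add_one_le_iff.2 htn)]
    linear_combination kernelRoot R ^ (t + 1) * one_sub_X_mul_geomSeries R

end Series

section Counting

variable (R : Type*) [CommRing R]

open scoped Classical in
/-- The generating function of the avoiding permutations of length at least `n`, by length minus
`n`, split according to the avoiding permutation of length `n` they extend. -/
noncomputable def avoidersSeries (n : ℕ) : R⟦X⟧ :=
  ∑ σ : Equiv.Perm (Fin n) with AvoidsH σ, extensionSeries R n (minInversionTop σ)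

theorem avoidersSeries_eq (n : ℕ) :
    avoidersSeries R n = C (hCount n : R) + X * avoidersSeries R (n + 1) := by
  classical
  have hsucc : avoidersSeries R (n + 1) = ∑ σ : Equiv.Perm (Fin n) with AvoidsH σ,
      ∑ v : Fin (n + 1), if (v : ℕ) ≤ minInversionTop σ ∨ v = Fin.last n then
        extensionSeries R (n + 1)
          (if (v : ℕ) ≤ minInversionTop σ then v + 1 else minInversionTop σ) else 0 := by
    simp only [avoidersSeries, Finset.sum_filter, ← (snocPerm_bijective n).sum_comp,
      Fintype.sum_prod_type, avoidsH_snocPerm_iff, minInversionTop_snocPerm, ite_and]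
    refine Finset.sum_congr rfl fun σ _ => ?_
    split_ifs <;> simp
  have hcard : (hCount n : R⟦X⟧) = ∑ σ : Equiv.Perm (Fin n) with AvoidsH σ, 1 := by
    simp [hCount, Nat.card_eq_fintype_card, Fintype.card_subtype]
  rw [hsucc, map_natCast, hcard, Finset.mul_sum, ← Finset.sum_add_distrib, avoidersSeries]
  exact Finset.sum_congr rfl fun σ _ => extensionSeries_eq R (minInversionTop_le σ)

theorem avoidersSeries_zero : avoidersSeries R 0 = identitySeries R := by
  have havoids (σ : Equiv.Perm (Fin 0)) : AvoidsH σ := avoidsH_iff.2 fun a => a.elim0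
  simp [avoidersSeries, havoids, extensionSeries]

theorem mk_hCount : mk (fun n => (hCount n : R)) = identitySeries R := by
  rw [← eq_mk_of_forall_eq_C_add_X_mul (avoidersSeries_eq R), avoidersSeries_zero]

end Counting

theorem hCount_gf_algebraic_general (R : Type*) [CommRing R] :
    let z : R⟦X⟧ := X
    let H : R⟦X⟧ := mk fun n => if n = 0 then 0 else (hCount n : R)
    z * (2 - z) * H ^ 2 - (1 - 3 * z + 2 * z ^ 2) * H + z * (1 - z) = 0 := by
  intro z H
  have hH : H = identitySeries R - 1 := by
    ext n
    rcases eq_or_ne n 0 with rfl | hn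
    · simp [H, identitySeries]
    · simp [H, ← mk_hCount, coeff_one, hn]
  rw [hH]
  linear_combination identitySeries_quadratic R

theorem hCount_gf_algebraic :
    let z : PowerSeries ℚ := PowerSeries.X
    let H : PowerSeries ℚ := PowerSeries.mk fun n => if n = 0 then 0 else (hCount n : ℚ)
    z * (2 - z) * H ^ 2 - (1 - 3 * z + 2 * z ^ 2) * H + z * (1 - z) = 0 := by
  exact hCount_gf_algebraic_general ℚ
end

section
/- Let h(n) denote the number of permutations of length n avoiding the patterns 4213, 2413 and 2143. Then h(n) is asymptotically equivalent to (5/18)·√(5/π)·5ⁿ·n^{−3/2}, i.e. h(n)·n^{3/2}/5ⁿ tends to (5/18)·√(5/π) as n → ∞. -/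
open Filter Topology PowerSeries

/-!
Write a nonempty permutation as `a L m`, where `L` is the maximal run of letters larger than the
first letter `a` that follows it. It avoids 4213, 2413 and 2143 if and only if `L` does, the letters
of `m` below `a` avoid 213, and the letters of `m` above `a` increase and exceed those of `L`. So
`m` shuffles a 213-avoiding sequence, which comes first, into an increasing one, and the generating
function `H` of `hCount` satisfies `H = 1 + x H D` with `D = C(x / (1 - x))` and `C` the Catalan
generating function. The quadratic equation of `C` turns this into `(2 - x) H = 1 + D`, that is
`2 h(n + 1) = h(n) + d(n + 1)`.

As Catalan numbers are moments of the semicircle law, `d(n + 1)` is an integral over `[0, π / 2]`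
with `(5 - 4 sin² x) ^ n` in the integrand. Solving the linear recurrence under the integral sign
gives such an integral for `h(n)`, up to a term `K / 2 ^ n`, and Laplace's method at `x = 0`
determines its growth.
-/

section Precedes

variable {α : Type*} {x y a : α} {l l₁ l₂ : List α}

/-- `x` occurs before `y` in `l`. -/
def Precedes (l : List α) (x y : α) : Prop :=
  [x, y].Sublist l

lemma precedes_cons_iff : Precedes (a :: l) x y ↔ x = a ∧ y ∈ l ∨ Precedes l x y := by
  rw [Precedes, Precedes, List.cons_sublist_cons', List.singleton_sublist, or_comm]

lemma precedes_append_iff :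
    Precedes (l₁ ++ l₂) x y ↔ Precedes l₁ x y ∨ x ∈ l₁ ∧ y ∈ l₂ ∨ Precedes l₂ x y := by
  induction l₁ with
  | nil => simp [Precedes]
  | cons a l₁ ih => simp only [List.cons_append, precedes_cons_iff, ih]; grind

lemma precedes_filter_iff {p : α → Bool} :
    Precedes (l.filter p) x y ↔ Precedes l x y ∧ p x ∧ p y := by
  induction l with
  | nil => simp [Precedes]
  | cons a l ih => rw [List.filter_cons]; split <;> simp only [precedes_cons_iff, ih] <;> grind

lemma precedes_ofFn_iff {n : ℕ} {f : Fin n → α} :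
    Precedes (List.ofFn f) x y ↔ ∃ i j, i < j ∧ f i = x ∧ f j = y := by
  have h := List.pairwise_iff_forall_sublist (l := List.ofFn f) (R := fun u v => ¬(u = x ∧ v = y))
  rw [List.pairwise_ofFn] at h
  grind [Precedes]

lemma Precedes.mem (h : Precedes l x y) : x ∈ l ∧ y ∈ l :=
  ⟨h.subset (by simp), h.subset (by simp)⟩

lemma Precedes.ne (h : Precedes l x y) (hl : l.Nodup) : x ≠ y := by
  simpa using hl.sublist h

lemma pairwise_iff_forall_precedes {R : α → α → Prop} :
    l.Pairwise R ↔ ∀ x y, Precedes l x y → R x y := by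
  simp only [List.pairwise_iff_forall_sublist, Precedes]

end Precedes

section Avoidance

variable {α : Type*} [LinearOrder α] {a : α} {L m : List α}

/-- Avoidance of the pattern 213 by a list without repetitions. -/
def ListAvoids213 (l : List α) : Prop :=
  ∀ p q r, Precedes l p q → Precedes l q r → q < p → ¬p < r

/-- Avoidance of 4213, 2413 and 2143 by a list without repetitions: the three patterns consist of
a 213 occurrence `p, q, r` and a larger letter `x` in any place before `r`. -/
def ListAvoidsH (l : List α) : Prop :=
  ∀ x p q r, Precedes l x r → Precedes l p q → Precedes l q r → q < p → p < r → ¬r < x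

lemma exists_lt_precedes_of_head_lt (hm : ∀ x ∈ m.head?, x < a) {y : α} (hy : y ∈ m)
    (hay : a < y) : ∃ q < a, Precedes m q y := by
  cases m with
  | nil => simp at hy
  | cons q m =>
    have hq : q < a := hm q rfl
    refine ⟨q, hq, precedes_cons_iff.2 (.inl ⟨rfl, ?_⟩)⟩
    exact (List.mem_cons.1 hy).resolve_left (hq.trans hay).ne'

lemma listAvoids213_cons_append_iff (hnd : (a :: (L ++ m)).Nodup) (hL : ∀ x ∈ L, a < x)
    (hm : ∀ x ∈ m.head?, x < a) :
    ListAvoids213 (a :: (L ++ m)) ↔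
      ListAvoids213 L ∧ ListAvoids213 m ∧ ∀ x ∈ m, x < a := by
  have hL' := fun x y => Precedes.mem (x := x) (y := y) (l := L)
  have hm' := fun x y => Precedes.mem (x := x) (y := y) (l := m)
  have hhead := fun y => exists_lt_precedes_of_head_lt (y := y) hm
  have ham : a ∉ m := by grind
  clear hnd hm
  simp only [ListAvoids213, precedes_cons_iff, precedes_append_iff, List.mem_append]
  constructor
  · intro h
    refine ⟨by grind, by grind, fun x hx => ?_⟩
    by_contra! hax
    -- With the first letter `q` of `m`, the word `a, q, x` is an occurrence of 213.
    obtain ⟨q, hqa, hq⟩ := hhead x hx (by grind)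
    have := h a q x
    grind
  · grind

lemma listAvoidsH_cons_append_iff (hnd : (a :: (L ++ m)).Nodup) (hL : ∀ x ∈ L, a < x)
    (hm : ∀ x ∈ m.head?, x < a) :
    ListAvoidsH (a :: (L ++ m)) ↔ ListAvoidsH L ∧ ListAvoids213 (m.filter (· < a)) ∧
      (m.filter (a < ·)).Pairwise (· < ·) ∧ ∀ x ∈ L, ∀ y ∈ m, a < y → x < y := by
  have hL' := fun x y => Precedes.mem (x := x) (y := y) (l := L)
  have hm' := fun x y => Precedes.mem (x := x) (y := y) (l := m)
  have hhead := fun y => exists_lt_precedes_of_head_lt (y := y) hm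
  have ham : a ∉ m := by grind
  have hLm : ∀ x ∈ L, ∀ y ∈ m, x ≠ y := by grind
  have hmm : ∀ x y, Precedes m x y → x ≠ y := fun x y h => h.ne (by grind)
  clear hnd hm
  simp only [ListAvoidsH, ListAvoids213, pairwise_iff_forall_precedes, precedes_filter_iff,
    precedes_cons_iff, precedes_append_iff, List.mem_append, decide_eq_true_eq]
  constructor
  · intro h
    refine ⟨fun x p q r => ?_, fun p q r => ?_, fun x y => ?_, fun x hx y hy hay => ?_⟩
    · have := h x p q r; grind
    · have := h a p q r; grind
    · rintro ⟨hxy, -, hy⟩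
      obtain ⟨q, hqa, hq⟩ := hhead y (hm' _ _ hxy).2 hy
      have := h x a q y; grind
    · obtain ⟨q, hqa, hq⟩ := hhead y hy hay
      have := h x a q y; grind
  · rintro ⟨h1, h2, h3, h4⟩ x p q r
    have := h1 x p q r
    have := h2 p q r
    have := h3 x r
    have := h4 x
    grind

end Avoidance

section Arrangements

variable {α : Type*} {P : List α → Prop} {s : Finset α} {l : List α}

open Classical in
/-- The lists with property `P` that contain every element of `s` once and nothing else. -/
noncomputable def arrangements (P : List α → Prop) (s : Finset α) : Finset (List α) :=
  Finset.filter P ⟨Multiset.lists s.val, Multiset.lists_nodup_finset s⟩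

lemma mem_arrangements :
    l ∈ arrangements P s ↔ l.Nodup ∧ (∀ x, x ∈ l ↔ x ∈ s) ∧ P l := by
  classical
  rw [arrangements, Finset.mem_filter, Finset.mem_mk, Multiset.mem_lists_iff, ← and_assoc]
  refine and_congr_left' ⟨fun h => ?_, fun ⟨hl, hs⟩ => ?_⟩
  · exact ⟨Multiset.coe_nodup.1 (h.subst s.nodup), fun x => by rw [← Finset.mem_val, h]; rfl⟩
  · exact (Multiset.Nodup.ext s.nodup (Multiset.coe_nodup.2 hl)).2 fun x => (hs x).symm

lemma length_of_mem_arrangements (hl : l ∈ arrangements P s) : l.length = s.card := by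
  classical
  obtain ⟨hnd, hs, -⟩ := mem_arrangements.1 hl
  rw [← List.toFinset_card_of_nodup hnd]
  congr 1
  ext x
  simp [hs]

lemma arrangements_empty (hP : P []) : arrangements P ∅ = {[]} := by
  ext l
  simp only [mem_arrangements, Finset.notMem_empty, iff_false, ← List.eq_nil_iff_forall_not_mem,
    Finset.mem_singleton]
  grind

end Arrangements

section FirstLetter

variable {α : Type*} [LinearOrder α] {a a' : α} {L L' m m' : List α}

lemma exists_eq_append_lt_head_lt {a : α} {l : List α} (ha : a ∉ l) :
    ∃ L m, l = L ++ m ∧ (∀ x ∈ L, a < x) ∧ ∀ x ∈ m.head?, x < a := by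
  refine ⟨l.takeWhile (a < ·), l.dropWhile (a < ·), List.takeWhile_append_dropWhile.symm,
    fun x hx => by simpa using List.mem_takeWhile_imp hx, fun x hx => ?_⟩
  have hxl : x ∈ l := (List.dropWhile_sublist _).mem (List.mem_of_mem_head? hx)
  have hxa := List.head?_dropWhile_not (p := (a < ·)) l
  grind

lemma append_inj_of_lt_of_head_lt (hL : ∀ x ∈ L, a < x) (hm : ∀ x ∈ m.head?, x < a)
    (hL' : ∀ x ∈ L', a < x) (hm' : ∀ x ∈ m'.head?, x < a) (h : L ++ m = L' ++ m') :
    L = L' ∧ m = m' := by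
  have key {L m : List α} (hL : ∀ x ∈ L, a < x) (hm : ∀ x ∈ m.head?, x < a) :
      (L ++ m).takeWhile (a < ·) = L := by
    rw [List.takeWhile_append_of_pos (by simpa using hL)]
    cases m with
    | nil => simp
    | cons x m => simp [(hm x rfl).le]
  have hLL' : L = L' := by rw [← key hL hm, h, key hL' hm']
  exact ⟨hLL', List.append_cancel_left (hLL' ▸ h)⟩

lemma card_eq_sum_of_cons_append_mem_iff {ι : Type*} {W : Finset (List α)} {I : Finset ι}
    {f : ι → α} {A B : ι → Finset (List α)} (hnil : [] ∉ W) (hW : ∀ l ∈ W, l.Nodup)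
    (hA : ∀ i ∈ I, ∀ L ∈ A i, ∀ x ∈ L, f i < x) (hB : ∀ i ∈ I, ∀ m ∈ B i, ∀ x ∈ m.head?, x < f i)
    (hinj : ∀ i ∈ I, ∀ j ∈ I, ∀ L ∈ A i, L ∈ A j → f i = f j → i = j)
    (hmem : ∀ a L m, (∀ x ∈ L, a < x) → (∀ x ∈ m.head?, x < a) →
      (a :: (L ++ m) ∈ W ↔ ∃ i ∈ I, f i = a ∧ L ∈ A i ∧ m ∈ B i)) :
    W.card = ∑ i ∈ I, (A i).card * (B i).card := by
  simp_rw [← Finset.card_product]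
  rw [← Finset.card_sigma]
  refine (Finset.card_nbij (fun x => f x.1 :: (x.2.1 ++ x.2.2)) ?_ ?_ ?_).symm
  · rintro ⟨i, L, m⟩ h
    simp only [Finset.mem_coe, Finset.mem_sigma, Finset.mem_product] at h
    exact (hmem _ _ _ (hA i h.1 L h.2.1) (hB i h.1 m h.2.2)).2 ⟨i, h.1, rfl, h.2⟩
  · rintro ⟨i, L, m⟩ h ⟨j, L', m'⟩ h' heq
    simp only [Finset.mem_coe, Finset.mem_sigma, Finset.mem_product, List.cons.injEq] at h h' heq
    obtain ⟨rfl, rfl⟩ := append_inj_of_lt_of_head_lt (hA i h.1 L h.2.1) (hB i h.1 m h.2.2)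
      (heq.1 ▸ hA j h'.1 L' h'.2.1) (heq.1 ▸ hB j h'.1 m' h'.2.2) heq.2
    obtain rfl := hinj i h.1 j h'.1 L h.2.1 h'.2.1 heq.1
    rfl
  · rintro (_ | ⟨a, l⟩) hl
    · exact absurd hl hnil
    · obtain ⟨L, m, rfl, hL, hm⟩ := exists_eq_append_lt_head_lt (List.nodup_cons.1 (hW _ hl)).1
      obtain ⟨i, hi, rfl, hLm⟩ := (hmem a L m hL hm).1 hl
      exact ⟨⟨i, L, m⟩, by simpa [hi] using hLm, rfl⟩

end FirstLetter

section Catalan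

variable {α : Type*} [LinearOrder α]

open Finset

lemma sum_card_lt_card_gt {M : Type*} [AddCommMonoid M] (s : Finset α) (f : ℕ × ℕ → M) {n : ℕ}
    (hs : #s = n + 1) :
    ∑ a ∈ s, f (#{x ∈ s | x < a}, #{x ∈ s | a < x}) = ∑ q ∈ antidiagonal n, f q := by
  obtain ⟨e, rfl⟩ : ∃ e : Fin (n + 1) ↪o α, s = univ.map e.toEmbedding :=
    ⟨s.orderEmbOfFin hs, (map_orderEmbOfFin_univ s hs).symm⟩
  simp [filter_map, filter_lt_eq_Ioi, filter_gt_eq_Iio,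
    Nat.sum_antidiagonal_eq_sum_range_succ_mk, sum_range]

theorem card_arrangements_listAvoids213 (s : Finset α) :
    #(arrangements ListAvoids213 s) = catalan #s := by
  induction s using Finset.strongInduction with | H s ih => ?_
  obtain rfl | hs := s.eq_empty_or_nonempty
  · rw [arrangements_empty (by simp [ListAvoids213, Precedes])]
    simp
  obtain ⟨n, hn⟩ := Nat.exists_eq_succ_of_ne_zero hs.card_pos.ne'
  have hrec : #(arrangements ListAvoids213 s) =
      ∑ a ∈ s, #(arrangements ListAvoids213 {x ∈ s | a < x}) *
        #(arrangements ListAvoids213 {x ∈ s | x < a}) := by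
    refine card_eq_sum_of_cons_append_mem_iff (f := id) ?_ ?_ ?_ ?_ ?_ ?_
    · grind [mem_arrangements]
    · grind [mem_arrangements]
    · grind [mem_arrangements]
    · grind [mem_arrangements]
    · grind
    · intro a L m hL hm
      simp only [mem_arrangements, mem_filter, id]
      constructor
      · rintro ⟨hnd, hs, h⟩
        rw [listAvoids213_cons_append_iff hnd hL hm] at h
        refine ⟨a, ?_⟩
        grind
      · rintro ⟨a, ha, rfl, hL', hm'⟩
        have hnd : (a :: (L ++ m)).Nodup := by grind
        refine ⟨hnd, ?_, (listAvoids213_cons_append_iff hnd hL hm).2 ?_⟩ <;> grind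
  rw [hrec, hn, catalan_succ', ← sum_card_lt_card_gt s (fun q => catalan q.1 * catalan q.2) hn]
  refine sum_congr rfl fun a ha => ?_
  rw [ih {x ∈ s | a < x} (filter_ssubset.2 ⟨a, ha, lt_irrefl a⟩),
    ih {x ∈ s | x < a} (filter_ssubset.2 ⟨a, ha, lt_irrefl a⟩), mul_comm]

end Catalan

section Shuffles

variable {α : Type*} [DecidableEq α] {A B m : List α}

open Finset

/-- The lists that interleave `A` and `B`. -/
def shuffles : List α → List α → Finset (List α)
  | [], B => {B}
  | a :: A, [] => {a :: A}
  | a :: A, b :: B => (shuffles A (b :: B)).image (a :: ·) ∪ (shuffles (a :: A) B).image (b :: ·)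

lemma mem_shuffles {p : α → Bool} (hA : ∀ x ∈ A, p x) (hB : ∀ x ∈ B, ¬p x) :
    m ∈ shuffles A B ↔ m.filter p = A ∧ m.filter (!p ·) = B := by
  induction A, B using shuffles.induct generalizing m with
  | case1 B =>
    rw [shuffles, mem_singleton, List.filter_eq_nil_iff]
    refine ⟨?_, fun ⟨hm, hmB⟩ => ?_⟩
    · rintro rfl
      exact ⟨hB, by simpa using hB⟩
    · rw [← hmB, List.filter_eq_self.2 (by simpa using hm)]
  | case2 a A =>
    rw [shuffles, mem_singleton, List.filter_eq_nil_iff]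
    refine ⟨?_, fun ⟨hmA, hm⟩ => ?_⟩
    · rintro rfl
      exact ⟨by simpa using hA, by simpa using hA⟩
    · rw [← hmA, List.filter_eq_self.2 (by simpa using hm)]
  | case3 a A b B ihA ihB =>
    rw [List.forall_mem_cons] at hA hB
    rw [shuffles, mem_union, mem_image, mem_image]
    rcases m with _ | ⟨x, m⟩
    · simp
    specialize @ihA m
    specialize @ihB m
    simp only [List.cons.injEq, List.filter_cons]
    grind

lemma card_shuffles (h : A.Disjoint B) :
    #(shuffles A B) = (A.length + B.length).choose B.length := by
  induction A, B using shuffles.induct with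
  | case1 B => simp [shuffles]
  | case2 a A => simp [shuffles]
  | case3 a A b B ihA ihB =>
    have hab : a ≠ b := by
      rintro rfl
      exact h List.mem_cons_self List.mem_cons_self
    rw [shuffles, card_union_of_disjoint, card_image_of_injective _ List.cons_injective,
      card_image_of_injective _ List.cons_injective, ihA (List.disjoint_of_disjoint_cons_left h),
      ihB (List.disjoint_of_disjoint_cons_right h)]
    · simp only [List.length_cons]
      rw [← add_assoc, ← add_assoc, add_right_comm _ 1, Nat.choose_succ_succ' (_ + 1), add_comm]
    · simp only [disjoint_left, mem_image]
      grind

lemma card_filter_head_mem_shuffles (h : A.Disjoint B) :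
    #{m ∈ shuffles A B | ∀ x ∈ m.head?, x ∈ A} = Nat.multichoose A.length B.length := by
  rcases A with _ | ⟨a, A⟩
  · cases B <;> simp [shuffles, filter_singleton]
  rcases B with _ | ⟨b, B⟩
  · simp [shuffles, filter_singleton]
  have hb : b ∉ a :: A := fun hb => h hb (by simp)
  have hfilter : {m ∈ shuffles (a :: A) (b :: B) | ∀ x ∈ m.head?, x ∈ a :: A} =
      (shuffles A (b :: B)).image (a :: ·) := by
    ext m
    simp only [shuffles, mem_filter, mem_union, mem_image]
    grind
  rw [hfilter, card_image_of_injective _ List.cons_injective,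
    card_shuffles (List.disjoint_of_disjoint_cons_left h), Nat.multichoose_eq]
  simp [add_right_comm, ← add_assoc]

end Shuffles

section Tails

variable {α : Type*} [LinearOrder α] {S T : Finset α} {m : List α}

open Finset

/-- The arrangements of `S ∪ T` that are empty or start in `S`, avoid 213 on `S` and increase
on `T`. -/
noncomputable def tails (S T : Finset α) : Finset (List α) :=
  arrangements (fun m => (∀ x ∈ m.head?, x ∈ S) ∧ ListAvoids213 (m.filter (· ∈ S)) ∧
    (m.filter (· ∉ S)).Pairwise (· < ·)) (S ∪ T)

lemma eq_sort_iff : m = T.sort ↔ m.Pairwise (· < ·) ∧ ∀ x, x ∈ m ↔ x ∈ T := by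
  refine ⟨?_, fun ⟨hm, hT⟩ => ?_⟩
  · rintro rfl
    exact ⟨T.sortedLT_sort.pairwise, by simp⟩
  · obtain rfl : m.toFinset = T := by ext; simp [hT]
    exact ((List.toFinset_sort _ hm.nodup).2 (hm.imp le_of_lt)).symm

lemma mem_tails_and_filter_eq_iff (h : Disjoint S T) {A : List α}
    (hA : A ∈ arrangements ListAvoids213 S) :
    m ∈ tails S T ∧ m.filter (· ∈ S) = A ↔
      m ∈ shuffles A T.sort ∧ ∀ x ∈ m.head?, x ∈ A := by
  obtain ⟨hnd, hAS, h213⟩ := mem_arrangements.1 hA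
  have hT : ∀ x ∈ T.sort, ¬decide (x ∈ S) := by
    simpa using disjoint_right.1 h
  rw [mem_shuffles (p := (· ∈ S)) (by simp [hAS]) hT, eq_sort_iff]
  simp only [tails, mem_arrangements, mem_union, hAS, decide_not]
  refine ⟨?_, ?_⟩
  · rintro ⟨⟨-, hm, hhead, -, hinc⟩, hmA⟩
    refine ⟨⟨hmA, hinc, fun x => ?_⟩, hhead⟩
    have hxS : x ∈ T → x ∉ S := fun hx => disjoint_right.1 h hx
    grind
  · rintro ⟨⟨hmA, hinc, hmT⟩, hhead⟩
    refine ⟨⟨?_, fun x => ?_, hhead, hmA ▸ h213, hinc⟩, hmA⟩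
    · refine (List.filter_append_perm (· ∈ S) m).nodup_iff.1 ?_
      rw [hmA, List.nodup_append]
      exact ⟨hnd, hinc.nodup, by grind⟩
    · grind

theorem card_tails (h : Disjoint S T) : #(tails S T) = catalan #S * Nat.multichoose #S #T := by
  have hmaps : Set.MapsTo (List.filter (· ∈ S)) (tails S T : Set (List α))
      (arrangements ListAvoids213 S) := by
    intro m hm
    simp only [tails, mem_arrangements, mem_coe] at *
    grind
  rw [card_eq_sum_card_fiberwise hmaps, ← card_arrangements_listAvoids213, ← smul_eq_mul]
  refine sum_eq_card_nsmul fun A hA => ?_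
  have hdisj : A.Disjoint T.sort := by
    simpa [List.disjoint_left, (mem_arrangements.1 hA).2.1] using disjoint_left.1 h
  rw [← length_of_mem_arrangements hA, ← length_sort (s := T) (· ≤ ·),
    ← card_filter_head_mem_shuffles hdisj]
  congr 1
  ext m
  simp [mem_tails_and_filter_eq_iff h hA]

end Tails

section Recursion

open Finset

lemma exists_eq_Ico_of_union_eq_Ico {α : Type*} [LinearOrder α] [LocallyFiniteOrder α]
    {lo hi : α} {U V : Finset α} (h : lo ≤ hi) (hlt : ∀ x ∈ U, ∀ y ∈ V, x < y)
    (hUV : U ∪ V = Ico lo hi) : ∃ c ∈ Icc lo hi, U = Ico lo c ∧ V = Ico c hi := by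
  have hmem (x : α) : x ∈ U ∨ x ∈ V ↔ lo ≤ x ∧ x < hi := by rw [← mem_union, hUV, mem_Ico]
  obtain rfl | hV := V.eq_empty_or_nonempty
  · exact ⟨hi, by simpa using h, by simpa using hUV, by simp⟩
  · have hc := V.min'_mem hV
    have hle (y : α) : y ∈ V → V.min' hV ≤ y := V.min'_le y
    refine ⟨V.min' hV, ?_, ?_, ?_⟩ <;> grind

lemma mem_tails_Ico_iff {lo hi a c : ℕ} (hac : a < c) {m : List ℕ} :
    m ∈ tails (Ico lo a) (Ico c hi) ↔ m.Nodup ∧ (∀ x, x ∈ m ↔ lo ≤ x ∧ x < a ∨ c ≤ x ∧ x < hi) ∧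
      (∀ x ∈ m.head?, x < a) ∧ ListAvoids213 (m.filter (· < a)) ∧
        (m.filter (a < ·)).Pairwise (· < ·) := by
  simp only [tails, mem_arrangements, mem_Ico, mem_union]
  refine and_congr_right fun _ => and_congr_right fun hm => ?_
  have hlow : m.filter (fun x => lo ≤ x ∧ x < a) = m.filter (· < a) :=
    List.filter_congr fun x hx => by grind
  have hhigh : m.filter (fun x => ¬(lo ≤ x ∧ x < a)) = m.filter (a < ·) :=
    List.filter_congr fun x hx => by grind
  rw [hlow, hhigh]
  exact and_congr_left' (by grind)

lemma cons_append_mem_arrangements_listAvoidsH_iff {lo hi a : ℕ} {L m : List ℕ}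
    (hL : ∀ x ∈ L, a < x) (hm : ∀ x ∈ m.head?, x < a) :
    a :: (L ++ m) ∈ arrangements ListAvoidsH (Ico lo hi) ↔
      a ∈ Ico lo hi ∧ ∃ c ∈ Icc (a + 1) hi, L ∈ arrangements ListAvoidsH (Ico (a + 1) c) ∧
        m ∈ tails (Ico lo a) (Ico c hi) := by
  simp only [mem_arrangements, mem_Ico, mem_Icc]
  constructor
  · rintro ⟨hnd, hs, h⟩
    obtain ⟨hHL, h213, hinc, hlt⟩ := (listAvoidsH_cons_append_iff hnd hL hm).1 h
    have ha : lo ≤ a ∧ a < hi := (hs a).1 List.mem_cons_self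
    obtain ⟨c, hc, hU, hV⟩ := exists_eq_Ico_of_union_eq_Ico (lo := a + 1) (hi := hi)
      (U := {x ∈ Ico lo hi | x ∈ L}) (V := {x ∈ Ico lo hi | x ∈ m ∧ a < x}) (by grind) (by grind)
      (by clear h213 hinc hm h hHL hlt; grind)
    rw [mem_Icc] at hc
    simp only [Finset.ext_iff, mem_filter, mem_Ico] at hU hV
    refine ⟨ha, c, hc, ⟨?_, ?_, hHL⟩, (mem_tails_Ico_iff hc.1).2 ⟨?_, ?_, hm, h213, hinc⟩⟩
    all_goals clear h213 hinc hm h hHL; grind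
  · rintro ⟨ha, c, hc, ⟨hLnd, hLmem, hLH⟩, hmt⟩
    obtain ⟨hmnd, hmmem, -, h213, hinc⟩ := (mem_tails_Ico_iff hc.1).1 hmt
    have hnd : (a :: (L ++ m)).Nodup := by grind
    refine ⟨hnd, ?_, (listAvoidsH_cons_append_iff hnd hL hm).2 ⟨hLH, h213, hinc, ?_⟩⟩
    all_goals clear h213 hinc hm hmt hLH; grind

lemma cons_append_mem_arrangements_listAvoidsH_succ_iff {lo n a : ℕ} {L m : List ℕ}
    (hL : ∀ x ∈ L, a < x) (hm : ∀ x ∈ m.head?, x < a) :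
    a :: (L ++ m) ∈ arrangements ListAvoidsH (Ico lo (lo + n + 1)) ↔
      ∃ i ∈ (antidiagonal n).sigma fun q => antidiagonal q.2, lo + i.2.1 = a ∧
        L ∈ arrangements ListAvoidsH (Ico (lo + i.2.1 + 1) (lo + i.2.1 + 1 + i.1.1)) ∧
        m ∈ tails (Ico lo (lo + i.2.1)) (Ico (lo + i.2.1 + 1 + i.1.1) (lo + n + 1)) := by
  rw [cons_append_mem_arrangements_listAvoidsH_iff hL hm]
  constructor
  · rintro ⟨ha, c, hc, hLm⟩
    rw [mem_Ico] at ha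
    rw [mem_Icc] at hc
    obtain ⟨s, rfl⟩ := Nat.exists_eq_add_of_le ha.1
    obtain ⟨i, rfl⟩ := Nat.exists_eq_add_of_le hc.1
    refine ⟨⟨(i, n - i), s, n - i - s⟩, ?_, rfl, hLm⟩
    simp only [mem_sigma, HasAntidiagonal.mem_antidiagonal]
    omega
  · rintro ⟨⟨⟨i, j⟩, s, t⟩, hi, rfl, hLm⟩
    simp only [mem_sigma, HasAntidiagonal.mem_antidiagonal] at hi
    refine ⟨mem_Ico.2 ?_, _, mem_Icc.2 ?_, hLm⟩ <;> simp <;> omega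

lemma card_arrangements_listAvoidsH_Ico_succ (lo n : ℕ) :
    #(arrangements ListAvoidsH (Ico lo (lo + n + 1))) = ∑ q ∈ antidiagonal n,
      ∑ r ∈ antidiagonal q.2,
        #(arrangements ListAvoidsH (Ico (lo + r.1 + 1) (lo + r.1 + 1 + q.1))) *
          (catalan r.1 * Nat.multichoose r.1 r.2) := by
  rw [sum_sigma', card_eq_sum_of_cons_append_mem_iff
    (I := (antidiagonal n).sigma fun q => antidiagonal q.2) (f := fun i => lo + i.2.1)
    (A := fun i => arrangements ListAvoidsH (Ico (lo + i.2.1 + 1) (lo + i.2.1 + 1 + i.1.1)))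
    (B := fun i => tails (Ico lo (lo + i.2.1)) (Ico (lo + i.2.1 + 1 + i.1.1) (lo + n + 1)))]
  · refine sum_congr rfl fun ⟨⟨i, j⟩, s, t⟩ hi => ?_
    simp only [mem_sigma, HasAntidiagonal.mem_antidiagonal] at hi
    have ht : lo + n + 1 - (lo + s + 1 + i) = t := by omega
    have hdisj : Disjoint (Ico lo (lo + s)) (Ico (lo + s + 1 + i) (lo + n + 1)) :=
      Ico_disjoint_Ico_consecutive lo (lo + s) _ |>.mono_right (Ico_subset_Ico_left (by omega))
    rw [card_tails hdisj, Nat.card_Ico, Nat.card_Ico, Nat.add_sub_cancel_left, ht]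
  · rw [mem_arrangements]
    exact fun h => absurd ((h.2.1 lo).2 (by simp)) List.not_mem_nil
  · grind [mem_arrangements]
  · grind [mem_arrangements]
  · grind [mem_arrangements, tails]
  · rintro ⟨⟨i, j⟩, s, t⟩ hi ⟨⟨i', j'⟩, s', t'⟩ hi' L hL hL' heq
    have hlen := length_of_mem_arrangements hL
    have hlen' := length_of_mem_arrangements hL'
    simp only [mem_sigma, HasAntidiagonal.mem_antidiagonal, Nat.card_Ico,
      Nat.add_sub_cancel_left, Nat.add_left_cancel_iff] at hi hi' hlen hlen' heq
    obtain rfl : i = i' := hlen.symm.trans hlen'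
    obtain ⟨rfl, rfl⟩ : j = j' ∧ t = t' := by omega
    rw [heq]
  · exact fun a L m hL hm => cons_append_mem_arrangements_listAvoidsH_succ_iff hL hm

lemma card_arrangements_listAvoidsH_Ico (lo n : ℕ) :
    #(arrangements ListAvoidsH (Ico lo (lo + n))) = #(arrangements ListAvoidsH (range n)) := by
  induction n using Nat.strong_induction_on generalizing lo with | _ n ih => ?_
  rcases n with _ | n
  · simp
  have hzero := card_arrangements_listAvoidsH_Ico_succ 0 n
  rw [range_eq_Ico, ← add_assoc, card_arrangements_listAvoidsH_Ico_succ]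
  rw [zero_add] at hzero
  rw [hzero]
  refine sum_congr rfl fun q hq => sum_congr rfl fun r _ => ?_
  have hq1 : q.1 < n + 1 := by
    have := HasAntidiagonal.mem_antidiagonal.1 hq
    omega
  rw [ih q.1 hq1, ih q.1 hq1]

/-- The number of tails on `n` letters that can follow the first letter and a run of given length:
the sum of `#(tails S T)` over the possible sizes of `S` and `T`. -/
def tailCount (n : ℕ) : ℕ :=
  ∑ q ∈ antidiagonal n, catalan q.1 * Nat.multichoose q.1 q.2

lemma card_arrangements_listAvoidsH_range_succ (n : ℕ) :
    #(arrangements ListAvoidsH (range (n + 1))) =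
      ∑ q ∈ antidiagonal n, #(arrangements ListAvoidsH (range q.1)) * tailCount q.2 := by
  have h := card_arrangements_listAvoidsH_Ico_succ 0 n
  simpa only [card_arrangements_listAvoidsH_Ico, zero_add, ← range_eq_Ico, ← mul_sum, tailCount]
    using h

end Recursion

section Encoding

lemma avoidsH_iff_forall {n : ℕ} (σ : Equiv.Perm (Fin n)) :
    AvoidsH σ ↔ ∀ x p q r : Fin n, x < r → p < q → q < r → σ q < σ p → σ p < σ r →
      ¬σ r < σ x := by
  constructor
  · rintro ⟨h4213, h2413, h2143⟩ x p q r hxr hpq hqr hqp hpr hrx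
    rcases lt_trichotomy x p with hxp | rfl | hxp
    · refine h4213 ⟨![x, p, q, r], ?_, ?_⟩
      · simp [Fin.strictMono_iff_lt_succ, Fin.forall_fin_succ, hxp, hpq, hqr]
      · simp [Fin.forall_fin_succ, p4213]
        omega
    · exact (hpr.trans hrx).false
    rcases lt_trichotomy x q with hxq | rfl | hxq
    · refine h2413 ⟨![p, x, q, r], ?_, ?_⟩
      · simp [Fin.strictMono_iff_lt_succ, Fin.forall_fin_succ, hxp, hxq, hqr]
      · simp [Fin.forall_fin_succ, p2413]
        omega
    · exact (hqp.trans (hpr.trans hrx)).false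
    · refine h2143 ⟨![p, q, x, r], ?_, ?_⟩
      · simp [Fin.strictMono_iff_lt_succ, Fin.forall_fin_succ, hxq, hpq, hxr]
      · simp [Fin.forall_fin_succ, p2143]
        omega
  · intro h
    refine ⟨?_, ?_, ?_⟩
    · rintro ⟨f, hf, hp⟩
      exact h (f 0) (f 1) (f 2) (f 3) (hf (by decide)) (hf (by decide)) (hf (by decide))
        ((hp 2 1).1 (by decide)) ((hp 1 3).1 (by decide)) ((hp 3 0).1 (by decide))
    · rintro ⟨f, hf, hp⟩
      exact h (f 1) (f 0) (f 2) (f 3) (hf (by decide)) (hf (by decide)) (hf (by decide))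
        ((hp 2 0).1 (by decide)) ((hp 0 3).1 (by decide)) ((hp 3 1).1 (by decide))
    · rintro ⟨f, hf, hp⟩
      exact h (f 2) (f 0) (f 1) (f 3) (hf (by decide)) (hf (by decide)) (hf (by decide))
        ((hp 1 0).1 (by decide)) ((hp 0 3).1 (by decide)) ((hp 3 2).1 (by decide))

lemma listAvoidsH_ofFn_iff {n : ℕ} (σ : Equiv.Perm (Fin n)) :
    ListAvoidsH (List.ofFn fun i => (σ i : ℕ)) ↔ AvoidsH σ := by
  rw [avoidsH_iff_forall]
  constructor
  · intro h x p q r hxr hpq hqr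
    exact h _ _ _ _ (precedes_ofFn_iff.2 ⟨x, r, hxr, rfl, rfl⟩)
      (precedes_ofFn_iff.2 ⟨p, q, hpq, rfl, rfl⟩) (precedes_ofFn_iff.2 ⟨q, r, hqr, rfl, rfl⟩)
  · intro h x p q r hxr hpq hqr
    obtain ⟨i, l, hil, rfl, rfl⟩ := precedes_ofFn_iff.1 hxr
    obtain ⟨j, k, hjk, rfl, rfl⟩ := precedes_ofFn_iff.1 hpq
    obtain ⟨k', l', hkl, hk, hl⟩ := precedes_ofFn_iff.1 hqr
    obtain rfl := σ.injective (Fin.ext hk)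
    obtain rfl := σ.injective (Fin.ext hl)
    exact h i j k' l' hil hjk hkl

lemma exists_ofFn_eq_of_mem_arrangements {n : ℕ} {P : List ℕ → Prop} {l : List ℕ}
    (hl : l ∈ arrangements P (Finset.range n)) :
    ∃ σ : Equiv.Perm (Fin n), (List.ofFn fun i => (σ i : ℕ)) = l := by
  have hlen : l.length = n := by simpa using length_of_mem_arrangements hl
  obtain ⟨hnd, hmem, -⟩ := mem_arrangements.1 hl
  simp only [Finset.mem_range] at hmem
  let f : Fin n → Fin n := fun i => ⟨l.get (i.cast hlen.symm), (hmem _).1 (l.get_mem _)⟩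
  have hf : f.Injective := fun i j hij => by
    simpa using hnd.injective_get (congrArg Fin.val hij)
  refine ⟨Equiv.ofBijective f (Finite.injective_iff_bijective.1 hf), ?_⟩
  subst hlen
  simp [f]

lemma hCount_eq_card_arrangements (n : ℕ) :
    hCount n = (arrangements ListAvoidsH (Finset.range n)).card := by
  classical
  rw [hCount, Nat.card_eq_fintype_card, Fintype.card_subtype]
  refine Finset.card_bij (fun σ _ => List.ofFn fun i => (σ i : ℕ)) ?_ ?_ ?_
  · intro σ hσ
    refine mem_arrangements.2 ⟨List.nodup_ofFn.2 (Fin.val_injective.comp σ.injective),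
      fun x => ?_, (listAvoidsH_ofFn_iff σ).2 (Finset.mem_filter.1 hσ).2⟩
    rw [List.mem_ofFn, Finset.mem_range]
    exact ⟨fun ⟨i, hi⟩ => hi ▸ (σ i).isLt, fun hx => ⟨σ.symm ⟨x, hx⟩, by simp⟩⟩
  · exact fun σ _ τ _ h => Equiv.ext fun i => Fin.ext (congrFun (List.ofFn_injective h) i)
  · intro l hl
    obtain ⟨σ, rfl⟩ := exists_ofFn_eq_of_mem_arrangements hl
    have hσ := (listAvoidsH_ofFn_iff σ).1 (mem_arrangements.1 hl).2.2
    exact ⟨σ, Finset.mem_filter.2 ⟨Finset.mem_univ σ, hσ⟩, rfl⟩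

lemma hCount_zero : hCount 0 = 1 := by
  rw [hCount_eq_card_arrangements, Finset.range_zero, arrangements_empty, Finset.card_singleton]
  rintro x p q r ⟨⟩

lemma hCount_succ (n : ℕ) : hCount (n + 1) =
    ∑ q ∈ Finset.HasAntidiagonal.antidiagonal n, hCount q.1 * tailCount q.2 := by
  simp only [hCount_eq_card_arrangements, card_arrangements_listAvoidsH_range_succ]

end Encoding

section GeneratingFunctions

open Finset

lemma coeff_mk_one_pow {R : Type*} [CommRing R] (k n : ℕ) :
    coeff n ((PowerSeries.mk 1 : R⟦X⟧) ^ k) = Nat.multichoose k n := by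
  rcases k with _ | k
  · cases n <;> simp [coeff_one]
  · rw [mk_one_pow_eq_mk_choose_add, coeff_mk, Nat.multichoose_eq, Nat.choose_symm_add,
      Nat.add_right_comm, Nat.add_sub_cancel]

lemma coeff_subst_X_mul_mk_one {R : Type*} [CommRing R] (f : R⟦X⟧) (n : ℕ) :
    coeff n (f.subst (X * PowerSeries.mk 1 : R⟦X⟧)) =
      ∑ q ∈ antidiagonal n, coeff q.1 f * Nat.multichoose q.1 q.2 := by
  have hsubst : HasSubst (X * PowerSeries.mk 1 : R⟦X⟧) :=
    HasSubst.of_constantCoeff_zero' (by simp)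
  rw [coeff_subst' hsubst, Nat.sum_antidiagonal_eq_sum_range_succ_mk,
    finsum_eq_sum_of_support_subset (s := range (n + 1))]
  · refine sum_congr rfl fun k hk => ?_
    rw [mul_pow, coeff_X_pow_mul', if_pos (mem_range_succ_iff.1 hk), coeff_mk_one_pow, smul_eq_mul]
  · refine Function.support_subset_iff'.2 fun k hk => ?_
    have hkn : ¬k ≤ n := by simpa using hk
    rw [mul_pow, coeff_X_pow_mul', if_neg hkn, smul_zero]

/-- The generating function `C(x / (1 - x))` of `tailCount`, where `C` is that of the Catalan
numbers. -/
noncomputable def tailSeries : ℤ⟦X⟧ :=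
  (catalanSeries.map (Nat.castRingHom ℤ)).subst (X * PowerSeries.mk 1 : ℤ⟦X⟧)

lemma coeff_tailSeries (n : ℕ) : coeff n tailSeries = tailCount n := by
  simp [tailSeries, coeff_subst_X_mul_mk_one, tailCount]

lemma one_sub_X_mul_tailSeries : (1 - X) * tailSeries = 1 - X + X * tailSeries ^ 2 := by
  have hgeom : (PowerSeries.mk 1 : ℤ⟦X⟧) * (1 - X) = 1 := mk_one_mul_one_sub_eq_one ℤ
  have hsubst : HasSubst (X * PowerSeries.mk 1 : ℤ⟦X⟧) :=
    HasSubst.of_constantCoeff_zero' (by simp)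
  have hcatalan : tailSeries ^ 2 * (X * PowerSeries.mk 1) + 1 = tailSeries := by
    have := congrArg (fun f => (f.map (Nat.castRingHom ℤ)).subst (X * PowerSeries.mk 1 : ℤ⟦X⟧))
      catalanSeries_sq_mul_X_add_one
    simpa [← coe_substAlgHom hsubst, substAlgHom_X, tailSeries] using this
  linear_combination (X - 1) * hcatalan + tailSeries ^ 2 * X * hgeom

lemma two_mul_hCount_succ (n : ℕ) : 2 * hCount (n + 1) = hCount n + tailCount (n + 1) := by
  set H : ℤ⟦X⟧ := PowerSeries.mk fun n => (hCount n : ℤ) with hH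
  have hrec : H = 1 + X * (H * tailSeries) := by
    ext m
    rcases m with _ | m
    · simp [hH, hCount_zero]
    · rw [map_add, coeff_succ_X_mul, coeff_mul]
      simp [hH, hCount_succ, coeff_one, coeff_tailSeries]
  have hlin : 2 * H - X * H = 1 + tailSeries := by
    linear_combination (1 + tailSeries) * hrec - H * one_sub_X_mul_tailSeries
  have hcoeff := congrArg (coeff (n + 1)) hlin
  simp only [two_mul, map_sub, map_add, coeff_succ_X_mul, hH, coeff_mk, coeff_one,
    Nat.succ_ne_zero, if_false, zero_add, coeff_tailSeries] at hcoeff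
  lia

lemma tailCount_succ (n : ℕ) :
    tailCount (n + 1) = ∑ k ∈ range (n + 1), n.choose k * catalan (k + 1) := by
  rw [tailCount, Nat.antidiagonal_succ, sum_cons, sum_map, Nat.multichoose_zero_succ, mul_zero,
    zero_add, Nat.sum_antidiagonal_eq_sum_range_succ_mk]
  refine sum_congr rfl fun k hk => ?_
  have hkn : k + 1 + (n - k) - 1 = n := by have := mem_range.1 hk; lia
  simp only [Function.Embedding.prodMap, Function.Embedding.coeFn_mk, Prod.map_apply,
    Function.Embedding.refl_apply, Nat.succ_eq_add_one]
  rw [Nat.multichoose_eq, hkn, Nat.choose_symm (mem_range_succ_iff.1 hk), mul_comm]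

end GeneratingFunctions

section Integrals

open Real

lemma integral_cos_pow_even_zero_pi_div_two (k : ℕ) :
    ∫ x in (0 : ℝ)..π / 2, cos x ^ (2 * k) = π / 2 * (k.centralBinom / 4 ^ k) := by
  induction k with
  | zero => simp
  | succ k ih =>
    have hbinom : ((k : ℝ) + 1) * (k + 1).centralBinom = 2 * (2 * k + 1) * k.centralBinom :=
      mod_cast Nat.succ_mul_centralBinom_succ k
    rw [Nat.mul_add_one, integral_cos_pow, ih, cos_pi_div_two, zero_pow (by lia), sin_zero]
    push_cast
    field_simp
    linear_combination -2 * π * 4 ^ k * hbinom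

lemma catalan_eq_integral (k : ℕ) :
    (catalan k : ℝ) = 4 / π * ∫ x in (0 : ℝ)..π / 2, (4 * cos x ^ 2) ^ k * sin x ^ 2 := by
  have hsplit (x : ℝ) : (4 * cos x ^ 2) ^ k * sin x ^ 2 =
      4 ^ k * (cos x ^ (2 * k) - cos x ^ (2 * (k + 1))) := by
    rw [sin_sq, mul_pow, ← pow_mul]
    ring
  have hbinom : ((k : ℝ) + 1) * (k + 1).centralBinom = 2 * (2 * k + 1) * k.centralBinom :=
    mod_cast Nat.succ_mul_centralBinom_succ k
  have hcatalan : ((k : ℝ) + 1) * catalan k = k.centralBinom :=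
    mod_cast succ_mul_catalan_eq_centralBinom k
  simp_rw [hsplit]
  rw [intervalIntegral.integral_const_mul, intervalIntegral.integral_sub
    (Continuous.intervalIntegrable (by fun_prop) _ _)
    (Continuous.intervalIntegrable (by fun_prop) _ _),
    integral_cos_pow_even_zero_pi_div_two, integral_cos_pow_even_zero_pi_div_two]
  field_simp
  rw [← mul_right_inj' (show (k : ℝ) + 1 ≠ 0 by positivity)]
  linear_combination 4 ^ k * (8 * hcatalan + 4 * hbinom)

lemma tailCount_succ_eq_integral (n : ℕ) :
    (tailCount (n + 1) : ℝ) = 4 / π * ∫ x in (0 : ℝ)..π / 2,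
      4 * cos x ^ 2 * (5 - 4 * sin x ^ 2) ^ n * sin x ^ 2 := by
  have hbinom (x : ℝ) : 4 * cos x ^ 2 * (5 - 4 * sin x ^ 2) ^ n * sin x ^ 2 =
      ∑ k ∈ Finset.range (n + 1), n.choose k * ((4 * cos x ^ 2) ^ (k + 1) * sin x ^ 2) := by
    rw [show 5 - 4 * sin x ^ 2 = 4 * cos x ^ 2 + 1 by rw [sin_sq]; ring, add_pow,
      Finset.mul_sum, Finset.sum_mul]
    refine Finset.sum_congr rfl fun k _ => ?_
    ring
  simp_rw [hbinom]
  rw [intervalIntegral.integral_finsetSum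
    fun k _ => Continuous.intervalIntegrable (by fun_prop) _ _, Finset.mul_sum, tailCount_succ]
  push_cast
  refine Finset.sum_congr rfl fun k _ => ?_
  rw [catalan_eq_integral, intervalIntegral.integral_const_mul, mul_left_comm]

/-- The density, with respect to `(5 - 4 * sin x ^ 2) ^ n * sin x ^ 2`, in the integral
representation of `hCount n`: the solution `f` of
`(2 * (5 - 4 * sin x ^ 2) - 1) * f x = 4 * cos x ^ 2`. -/
noncomputable def hDensity (x : ℝ) : ℝ :=
  4 * cos x ^ 2 / (9 - 8 * sin x ^ 2)

lemma nine_sub_eight_mul_sin_sq_pos (x : ℝ) : 0 < 9 - 8 * sin x ^ 2 := by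
  linarith [sin_sq_le_one x]

lemma continuous_hDensity : Continuous hDensity :=
  Continuous.div (by fun_prop) (by fun_prop) fun x => (nine_sub_eight_mul_sin_sq_pos x).ne'

lemma tailCount_succ_eq_sub_integral (n : ℕ) :
    (tailCount (n + 1) : ℝ) =
      2 * (4 / π * ∫ x in (0 : ℝ)..π / 2, hDensity x * (5 - 4 * sin x ^ 2) ^ (n + 1) * sin x ^ 2) -
        4 / π * ∫ x in (0 : ℝ)..π / 2, hDensity x * (5 - 4 * sin x ^ 2) ^ n * sin x ^ 2 := by
  have hcont := continuous_hDensity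
  rw [tailCount_succ_eq_integral, mul_left_comm, ← mul_sub]
  congr 1
  rw [← intervalIntegral.integral_const_mul, ← intervalIntegral.integral_sub
      (Continuous.intervalIntegrable (by fun_prop) _ _)
      (Continuous.intervalIntegrable (by fun_prop) _ _)]
  congr 1 with x
  have hdensity : hDensity x * (9 - 8 * sin x ^ 2) = 4 * cos x ^ 2 :=
    div_mul_cancel₀ _ (nine_sub_eight_mul_sin_sq_pos x).ne'
  linear_combination -(5 - 4 * sin x ^ 2) ^ n * sin x ^ 2 * hdensity

lemma exists_hCount_eq_integral_add :
    ∃ K : ℝ, ∀ n : ℕ, (hCount n : ℝ) =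
      4 / π * (∫ x in (0 : ℝ)..π / 2, hDensity x * (5 - 4 * sin x ^ 2) ^ n * sin x ^ 2) +
        K / 2 ^ n := by
  refine ⟨hCount 0 -
    4 / π * ∫ x in (0 : ℝ)..π / 2, hDensity x * (5 - 4 * sin x ^ 2) ^ 0 * sin x ^ 2, fun n => ?_⟩
  induction n with
  | zero => simp
  | succ n ih =>
    have hrec : 2 * (hCount (n + 1) : ℝ) = hCount n + tailCount (n + 1) :=
      mod_cast two_mul_hCount_succ n
    rw [pow_succ, ← div_div]
    linear_combination hrec / 2 + ih / 2 + tailCount_succ_eq_sub_integral n / 2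

end Integrals

section Laplace

open Real Set MeasureTheory

lemma integral_sq_mul_exp_neg_mul_sq {c : ℝ} (hc : 0 < c) :
    ∫ s in Ioi (0 : ℝ), s ^ 2 * exp (-c * s ^ 2) = √π / (4 * c ^ (3 / 2 : ℝ)) := by
  have h := integral_rpow_mul_exp_neg_mul_rpow (p := 2) (q := 2) two_pos (by norm_num) hc
  simp only [rpow_two] at h
  rw [h, show ((2 : ℝ) + 1) / 2 = 1 / 2 + 1 by norm_num, Gamma_add_one (by norm_num),
    Gamma_one_half_eq, show -((2 : ℝ) + 1) / 2 = -(3 / 2) by norm_num, rpow_neg hc.le]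
  ring

lemma integrableOn_sq_mul_exp_neg_mul_sq {c : ℝ} (hc : 0 < c) :
    IntegrableOn (fun s : ℝ => s ^ 2 * exp (-c * s ^ 2)) (Ioi 0) := by
  simpa only [rpow_two] using
    integrableOn_rpow_mul_exp_neg_mul_rpow (p := 2) (s := 2) (by norm_num) (by norm_num) hc

variable {f : ℝ → ℝ} {c s : ℝ} {n : ℕ}

/-- The integrand `f x * (1 - c * sin x ^ 2) ^ n * sin x ^ 2` times `n`, at `x = s / √n`. -/
noncomputable def rescaledIntegrand (f : ℝ → ℝ) (c : ℝ) (n : ℕ) (s : ℝ) : ℝ :=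
  f (s / √n) * (1 - c * sin (s / √n) ^ 2) ^ n * (n * sin (s / √n) ^ 2)

lemma rpow_mul_integral_eq_integral_rescaledIntegrand (f : ℝ → ℝ) (c : ℝ) (hn : n ≠ 0) :
    (n : ℝ) ^ (3 / 2 : ℝ) * ∫ x in (0 : ℝ)..π / 2, f x * (1 - c * sin x ^ 2) ^ n * sin x ^ 2 =
      ∫ s in Ioi (0 : ℝ), (Iic (√n * (π / 2))).indicator (rescaledIntegrand f c n) s := by
  have hsqrt : √(n : ℝ) ≠ 0 := by positivity
  have hpow : (n : ℝ) ^ (3 / 2 : ℝ) = √n * n := by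
    rw [show (3 / 2 : ℝ) = 1 / 2 + 1 by norm_num, rpow_add_one (by positivity), sqrt_eq_rpow]
  have hcomp := intervalIntegral.integral_comp_div (a := 0) (b := √n * (π / 2))
    (fun x => f x * (1 - c * sin x ^ 2) ^ n * (n * sin x ^ 2)) hsqrt
  rw [zero_div, mul_div_cancel_left₀ _ hsqrt, smul_eq_mul] at hcomp
  rw [setIntegral_indicator measurableSet_Iic, Ioi_inter_Iic,
    ← intervalIntegral.integral_of_le (by positivity)]
  unfold rescaledIntegrand
  rw [hcomp, hpow, mul_assoc, ← intervalIntegral.integral_const_mul]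
  congr 2 with x
  ring

lemma tendsto_div_sqrt_natCast (s : ℝ) : Tendsto (fun n : ℕ => s / √n) atTop (𝓝 0) :=
  (tendsto_sqrt_atTop.comp tendsto_natCast_atTop_atTop).const_div_atTop s

lemma tendsto_natCast_mul_sin_div_sqrt_sq (s : ℝ) :
    Tendsto (fun n : ℕ => (n : ℝ) * sin (s / √n) ^ 2) atTop (𝓝 (s ^ 2)) := by
  have hsinc : Tendsto (fun n : ℕ => sinc (s / √n)) atTop (𝓝 1) := by
    simpa [Function.comp_def] using (continuous_sinc.tendsto 0).comp (tendsto_div_sqrt_natCast s)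
  have hlim : Tendsto (fun n : ℕ => s ^ 2 * sinc (s / √n) ^ 2) atTop (𝓝 (s ^ 2)) := by
    simpa using (hsinc.pow 2).const_mul (s ^ 2)
  refine hlim.congr' ?_
  filter_upwards [eventually_ne_atTop 0] with n hn
  have hsin : sin (s / √n) = s / √n * sinc (s / √n) := by
    rcases eq_or_ne (s / √n) 0 with h | h
    · simp [h]
    · rw [sinc_of_ne_zero h, mul_div_cancel₀ _ h]
  rw [hsin, mul_pow, div_pow, sq_sqrt (by positivity), ← mul_assoc,
    mul_div_cancel₀ _ (by positivity)]

lemma tendsto_rescaledIntegrand (hf : ContinuousAt f 0) (c s : ℝ) :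
    Tendsto (fun n => rescaledIntegrand f c n s) atTop (𝓝 (f 0 * (s ^ 2 * exp (-c * s ^ 2)))) := by
  have hsin := tendsto_natCast_mul_sin_div_sqrt_sq s
  have hexp : Tendsto (fun n : ℕ => (1 + -c * sin (s / √n) ^ 2) ^ n) atTop
      (𝓝 (exp (-c * s ^ 2))) :=
    tendsto_one_add_pow_exp_of_tendsto <| (hsin.const_mul (-c)).congr fun n => by ring
  convert ((hf.tendsto.comp (tendsto_div_sqrt_natCast s)).mul hexp).mul hsin using 1
  · ext n
    simp [rescaledIntegrand, sub_eq_add_neg]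
  · ring_nf

lemma one_sub_mul_sin_sq_pow_le {x : ℝ} (hc : 0 ≤ c) (hc1 : c ≤ 1) (hx0 : 0 ≤ x)
    (hx : x ≤ π / 2) (n : ℕ) :
    (1 - c * sin x ^ 2) ^ n ≤ exp (-(c * (2 / π) ^ 2) * (n * x ^ 2)) := by
  have hnonneg : 0 ≤ 1 - c * sin x ^ 2 := by nlinarith [sin_sq_le_one x, sq_nonneg (sin x)]
  have hjordan : (2 / π * x) ^ 2 ≤ sin x ^ 2 := by
    gcongr
    exact mul_le_sin hx0 hx
  calc (1 - c * sin x ^ 2) ^ n ≤ exp (-(c * sin x ^ 2)) ^ n := by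
        gcongr
        exact one_sub_le_exp_neg _
    _ ≤ exp (-(c * (2 / π * x) ^ 2)) ^ n := by gcongr
    _ = _ := by
        rw [← exp_nat_mul]
        ring_nf

lemma abs_rescaledIntegrand_le {M : ℝ} (hM : ∀ x ∈ Icc 0 (π / 2), |f x| ≤ M) (hc : 0 ≤ c)
    (hc1 : c ≤ 1) (hn : n ≠ 0) (hs : 0 ≤ s) (hsn : s ≤ √n * (π / 2)) :
    |rescaledIntegrand f c n s| ≤ M * (s ^ 2 * exp (-(c * (2 / π) ^ 2) * s ^ 2)) := by
  have hx0 : 0 ≤ s / √n := by positivity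
  have hx : s / √n ≤ π / 2 := by rwa [div_le_iff₀' (by positivity)]
  have hnx : n * (s / √n) ^ 2 = s ^ 2 := by
    rw [div_pow, sq_sqrt (by positivity), mul_div_cancel₀ _ (by positivity)]
  have hM0 : 0 ≤ M := (abs_nonneg _).trans (hM _ ⟨hx0, hx⟩)
  have hpow := one_sub_mul_sin_sq_pow_le hc hc1 hx0 hx n
  have hnonneg : 0 ≤ 1 - c * sin (s / √n) ^ 2 := by
    nlinarith [sin_sq_le_one (s / √n), sq_nonneg (sin (s / √n))]
  have hsin : n * sin (s / √n) ^ 2 ≤ s ^ 2 := by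
    rw [← hnx]
    exact mul_le_mul_of_nonneg_left (sq_le_sq.2 abs_sin_le_abs) n.cast_nonneg
  rw [hnx] at hpow
  rw [rescaledIntegrand, abs_mul, abs_mul, abs_of_nonneg (pow_nonneg hnonneg n),
    abs_of_nonneg (by positivity : 0 ≤ n * sin (s / √n) ^ 2)]
  calc |f (s / √n)| * (1 - c * sin (s / √n) ^ 2) ^ n * (n * sin (s / √n) ^ 2)
      ≤ M * exp (-(c * (2 / π) ^ 2) * s ^ 2) * s ^ 2 := by
        gcongr
        exact hM _ ⟨hx0, hx⟩
    _ = _ := by ring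

lemma tendsto_integral_rescaledIntegrand (hf : Continuous f) (hc : 0 < c) (hc1 : c ≤ 1) :
    Tendsto (fun n : ℕ => ∫ s in Ioi (0 : ℝ),
      (Iic (√n * (π / 2))).indicator (rescaledIntegrand f c n) s) atTop
      (𝓝 (∫ s in Ioi (0 : ℝ), f 0 * (s ^ 2 * exp (-c * s ^ 2)))) := by
  obtain ⟨M, hM⟩ := (isCompact_Icc (a := 0) (b := π / 2)).exists_bound_of_continuousOn
    hf.continuousOn
  have hM0 : 0 ≤ M := (norm_nonneg _).trans (hM 0 ⟨le_rfl, by positivity⟩)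
  refine tendsto_integral_filter_of_dominated_convergence
    (fun s => M * (s ^ 2 * exp (-(c * (2 / π) ^ 2) * s ^ 2))) ?_ ?_ ?_ ?_
  · refine .of_forall fun n => AEStronglyMeasurable.indicator ?_ measurableSet_Iic
    unfold rescaledIntegrand
    exact Continuous.aestronglyMeasurable (by fun_prop)
  · filter_upwards [eventually_ne_atTop 0] with n hn
    refine ae_restrict_of_forall_mem measurableSet_Ioi fun s hs => ?_
    rw [norm_indicator_eq_indicator_norm]
    exact indicator_apply_le' (abs_rescaledIntegrand_le hM hc.le hc1 hn (mem_Ioi.1 hs).le)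
      fun _ => by positivity
  · exact (integrableOn_sq_mul_exp_neg_mul_sq (by positivity)).const_mul M
  · refine ae_restrict_of_forall_mem measurableSet_Ioi fun s _ => ?_
    refine (tendsto_rescaledIntegrand hf.continuousAt c s).congr' ?_
    have hsqrt : Tendsto (fun n : ℕ => √(n : ℝ) * (π / 2)) atTop atTop :=
      (tendsto_sqrt_atTop.comp tendsto_natCast_atTop_atTop).atTop_mul_const (by positivity)
    filter_upwards [hsqrt.eventually_ge_atTop s] with n hn
    rw [indicator_of_mem (mem_Iic.2 hn)]

theorem tendsto_rpow_mul_integral_one_sub_mul_sin_sq_pow (hf : Continuous f) (hc : 0 < c)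
    (hc1 : c ≤ 1) :
    Tendsto (fun n : ℕ => (n : ℝ) ^ (3 / 2 : ℝ) *
      ∫ x in (0 : ℝ)..π / 2, f x * (1 - c * sin x ^ 2) ^ n * sin x ^ 2) atTop
      (𝓝 (f 0 * (√π / (4 * c ^ (3 / 2 : ℝ))))) := by
  rw [← integral_sq_mul_exp_neg_mul_sq hc, ← integral_const_mul]
  refine (tendsto_integral_rescaledIntegrand hf hc hc1).congr' ?_
  filter_upwards [eventually_ne_atTop 0] with n hn
  exact (rpow_mul_integral_eq_integral_rescaledIntegrand f c hn).symm

end Laplace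

lemma four_div_pi_mul_hDensity_zero_mul :
    4 / Real.pi * (hDensity 0 * (√Real.pi / (4 * (4 / 5) ^ (3 / 2 : ℝ)))) =
      5 / 18 * √(5 / Real.pi) := by
  have hpow : (4 / 5 : ℝ) ^ (3 / 2 : ℝ) = 8 / (5 * √5) := by
    rw [show (3 / 2 : ℝ) = 1 / 2 + 1 by norm_num, Real.rpow_add_one (by norm_num),
      ← Real.sqrt_eq_rpow, Real.sqrt_div (by norm_num), show (4 : ℝ) = 2 ^ 2 by norm_num,
      Real.sqrt_sq (by norm_num)]
    field_simp
    norm_num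
  have hpi : √Real.pi ^ 2 = Real.pi := Real.sq_sqrt Real.pi_pos.le
  rw [hpow, Real.sqrt_div (by norm_num)]
  simp only [hDensity, Real.cos_zero, Real.sin_zero]
  field_simp
  rw [hpi]
  ring

lemma tendsto_natCast_rpow_div_pow (s : ℝ) {r : ℝ} (hr : 1 < r) :
    Tendsto (fun n : ℕ => (n : ℝ) ^ s / r ^ n) atTop (𝓝 0) := by
  have h := (tendsto_rpow_mul_exp_neg_mul_atTop_nhds_zero s _ (Real.log_pos hr)).comp
    tendsto_natCast_atTop_atTop
  refine h.congr fun n => ?_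
  rw [Function.comp_apply, neg_mul, Real.exp_neg, mul_comm, mul_comm (Real.log r),
    Real.exp_nat_mul, Real.exp_log (by positivity), div_eq_inv_mul]

theorem hCount_asymptotics :
    Tendsto (fun n : ℕ => (hCount n : ℝ) * (n : ℝ) ^ ((3 : ℝ) / 2) / 5 ^ n)
      atTop (nhds ((5 / 18) * Real.sqrt (5 / Real.pi))) := by
  obtain ⟨K, hK⟩ := exists_hCount_eq_integral_add
  have hmain := (tendsto_rpow_mul_integral_one_sub_mul_sin_sq_pow continuous_hDensity
    (c := 4 / 5) (by norm_num) (by norm_num)).const_mul (4 / Real.pi)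
  have hrem := (tendsto_natCast_rpow_div_pow (3 / 2) (r := 10) (by norm_num)).const_mul K
  rw [four_div_pi_mul_hDensity_zero_mul] at hmain
  rw [← add_zero (5 / 18 * _), ← mul_zero K]
  refine (hmain.add hrem).congr fun n => ?_
  have hscale (x : ℝ) : hDensity x * (5 - 4 * Real.sin x ^ 2) ^ n * Real.sin x ^ 2 =
      5 ^ n * (hDensity x * (1 - 4 / 5 * Real.sin x ^ 2) ^ n * Real.sin x ^ 2) := by
    rw [show 5 - 4 * Real.sin x ^ 2 = 5 * (1 - 4 / 5 * Real.sin x ^ 2) by ring, mul_pow]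
    ring
  simp only [hK, hscale, intervalIntegral.integral_const_mul]
  rw [show (10 : ℝ) = 2 * 5 by norm_num, mul_pow]
  field_simp
end
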